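/- Let K be a convex body in ℝ^n (n ≥ 2) with 0 in its interior such that either the barycenter of K is at the origin or the barycenter of the polar body K° is at the origin. Then there exists an absolute constant C > 0 such that for every 1 ≤ k ≤ n−1 and every k-dimensional linear subspace H of ℝ^n, vrad(P_H(K_out)) ≤ (n/k)·C·(log n)^3 · vrad(P_H(K_in)), where the volume radii are computed in H. -/

import Mathlib

open MeasureTheory Metric Set
open scoped ENNReal RealInnerProductSpace Pointwise

noncomputable section

/-- The polar body of `K`. -/
def polarBody {n : ℕ} (K : Set (EuclideanSpace ℝ (Fin n))) : Set (EuclideanSpace ℝ (Fin n)) :=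
  {x | ∀ y ∈ K, ⟪x, y⟫ ≤ 1}

/-- The orthogonal projection of a set onto a subspace, viewed inside the ambient space. -/
def projSet {n : ℕ} (H : Submodule ℝ (EuclideanSpace ℝ (Fin n)))
    (A : Set (EuclideanSpace ℝ (Fin n))) : Set (EuclideanSpace ℝ (Fin n)) :=
  (fun x => (Submodule.orthogonalProjectionOnto H x : EuclideanSpace ℝ (Fin n))) '' A

/-- The volume radius of a subset of a `k`-dimensional subspace `H`: the `k`-th root of the
ratio of its `k`-dimensional (Hausdorff) volume to that of the unit ball of `H`. -/
def vrad {n : ℕ} (k : ℕ) (H : Submodule ℝ (EuclideanSpace ℝ (Fin n)))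
    (A : Set (EuclideanSpace ℝ (Fin n))) : ℝ≥0∞ :=
  (μH[(k : ℝ)] A / μH[(k : ℝ)] (closedBall (0 : EuclideanSpace ℝ (Fin n)) 1 ∩ (H : Set _)))
    ^ ((k : ℝ)⁻¹)

set_option linter.unusedSectionVars false

section part1
open MeasureTheory Metric Set
open scoped ENNReal RealInnerProductSpace Pointwise

lemma oneD {A B : Set ℝ} (hA : IsCompact A) (hB : IsCompact B) (hA0 : A.Nonempty)
    (hB0 : B.Nonempty) : volume A + volume B ≤ volume (A + B) := by
  obtain ⟨a, ha, hamax⟩ := hA.exists_isGreatest hA0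
  obtain ⟨b, hb, hbmin⟩ := hB.exists_isLeast hB0
  have h1 : volume ((fun x => x + b) '' A) = volume A := by
    simp [image_add_right, measure_preimage_add_right]
  have h2 : volume ((fun x => a + x) '' B) = volume B := by
    simp [image_add_left, measure_preimage_add]
  rw [← h1, ← h2]
  have hd : AEDisjoint volume ((fun x => x + b) '' A) ((fun x => a + x) '' B) := by
    refine measure_mono_null (t := {a + b}) ?_ (by simp)
    rintro x ⟨⟨y, hy, rfl⟩, ⟨z, hz, h⟩⟩
    have := hamax hy
    have := hbmin hz
    simp only at h
    simp only [mem_singleton_iff]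
    linarith
  rw [← measure_union₀' ((hA.image (by fun_prop)).measurableSet.nullMeasurableSet) hd]
  apply measure_mono
  rintro x (⟨y, hy, rfl⟩ | ⟨y, hy, rfl⟩)
  · exact add_mem_add hy hb
  · exact add_mem_add ha hy

lemma oneD_meas {A B C : Set ℝ} (hA : MeasurableSet A) (hB : MeasurableSet B) (hA0 : A.Nonempty)
    (hB0 : B.Nonempty) {t : ℝ} (ht0 : 0 < t) (ht1 : t < 1)
    (hC : ∀ x ∈ A, ∀ y ∈ B, (1 - t) * x + t * y ∈ C) :
    ENNReal.ofReal (1 - t) * volume A + ENNReal.ofReal t * volume B ≤ volume C := by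
  have key : ∀ A' ⊆ A, IsCompact A' → A'.Nonempty → ∀ B' ⊆ B, IsCompact B' → B'.Nonempty →
      ENNReal.ofReal (1 - t) * volume A' + ENNReal.ofReal t * volume B' ≤ volume C := by
    intro A' hA' hAc hAn B' hB' hBc hBn
    have h := oneD (hAc.smul (1 - t)) (hBc.smul t) (hAn.smul_set) (hBn.smul_set)
    rw [Measure.addHaar_smul, Measure.addHaar_smul] at h
    simp only [Module.finrank_self, pow_one] at h
    rw [abs_of_pos ht0, abs_of_pos (by linarith)] at h
    refine h.trans (measure_mono ?_)
    rintro x ⟨_, ⟨a, ha, rfl⟩, _, ⟨b, hb, rfl⟩, rfl⟩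
    exact hC a (hA' ha) b (hB' hb)
  obtain ⟨a, ha⟩ := hA0
  obtain ⟨b, hb⟩ := hB0
  rw [hA.measure_eq_iSup_isCompact, hB.measure_eq_iSup_isCompact]
  simp only [ENNReal.mul_iSup]
  refine ENNReal.iSup_add_iSup_le ?_
  intro A' B'
  have aux : ∀ (c : ℝ≥0∞) (S S' : Set ℝ) (s : ℝ), s ∈ S → ∃ S'' ⊆ S, IsCompact S'' ∧ S''.Nonempty ∧
      (⨆ (_ : S' ⊆ S), ⨆ (_ : IsCompact S'), c * volume S') ≤ c * volume S'' := by
    intro c S S' s hs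
    by_cases h : S' ⊆ S ∧ IsCompact S'
    · refine ⟨insert s S', insert_subset hs h.1, h.2.insert s, insert_nonempty _ _, ?_⟩
      simp only [h.1, h.2, iSup_pos]
      gcongr
      exact subset_insert _ _
    · refine ⟨{s}, by simpa using hs, isCompact_singleton, singleton_nonempty _, ?_⟩
      refine iSup_le fun h1 => iSup_le fun h2 => absurd ⟨h1, h2⟩ h
  obtain ⟨A'', hA1, hA2, hA3, hA4⟩ := aux (ENNReal.ofReal (1 - t)) A A' a ha
  obtain ⟨B'', hB1, hB2, hB3, hB4⟩ := aux (ENNReal.ofReal t) B B' b hb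
  exact (add_le_add hA4 hB4).trans (key A'' hA1 hA2 hA3 B'' hB1 hB2 hB3)

lemma ennreal_amgm (a b : ℝ≥0∞) {t : ℝ} (ht0 : 0 < t) (ht1 : t < 1) :
    a ^ (1 - t) * b ^ t ≤ ENNReal.ofReal (1 - t) * a + ENNReal.ofReal t * b := by
  have h1 : 0 < 1 - t := by linarith
  by_cases ha : a = ∞
  · subst ha
    rw [ENNReal.mul_top (by simpa using h1)]
    simp
  by_cases hb : b = ∞
  · subst hb
    rw [ENNReal.mul_top (by simpa using ht0)]
    simp
  lift a to NNReal using ha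
  lift b to NNReal using hb
  have := Real.geom_mean_le_arith_mean2_weighted h1.le ht0.le a.2 b.2 (by ring)
  rw [← ENNReal.ofReal_coe_nnreal, ← ENNReal.ofReal_coe_nnreal,
    ENNReal.ofReal_rpow_of_nonneg a.coe_nonneg h1.le, ENNReal.ofReal_rpow_of_nonneg b.coe_nonneg ht0.le,
    ← ENNReal.ofReal_mul (by positivity), ← ENNReal.ofReal_mul h1.le, ← ENNReal.ofReal_mul ht0.le,
    ← ENNReal.ofReal_add (by positivity) (by positivity)]
  exact ENNReal.ofReal_le_ofReal this

/-- normalized one-dimensional functional inequality -/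
lemma pl_norm {f g h : ℝ → ℝ} (hf : Measurable f) (hg : Measurable g) (hh : Measurable h)
    (hf0 : ∀ x, 0 ≤ f x) (hg0 : ∀ x, 0 ≤ g x) (hh0 : ∀ x, 0 ≤ h x)
    (hf1 : ∀ x, f x ≤ 1) (hg1 : ∀ x, g x ≤ 1)
    (hfs : ∀ s < 1, ∃ x, s < f x) (hgs : ∀ s < 1, ∃ x, s < g x)
    {t : ℝ} (ht0 : 0 < t) (ht1 : t < 1)
    (H : ∀ x y, f x ^ (1 - t) * g y ^ t ≤ h ((1 - t) * x + t * y)) :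
    ENNReal.ofReal (1 - t) * (∫⁻ x, ENNReal.ofReal (f x)) +
      ENNReal.ofReal t * (∫⁻ x, ENNReal.ofReal (g x)) ≤ ∫⁻ x, ENNReal.ofReal (h x) := by
  rw [lintegral_eq_lintegral_meas_lt _ (Filter.Eventually.of_forall hf0) hf.aemeasurable,
    lintegral_eq_lintegral_meas_lt _ (Filter.Eventually.of_forall hg0) hg.aemeasurable,
    lintegral_eq_lintegral_meas_lt _ (Filter.Eventually.of_forall hh0) hh.aemeasurable]
  have hm : ∀ u : ℝ → ℝ, Measurable (fun t => volume {a : ℝ | t < u a}) := by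
    intro u
    apply Antitone.measurable
    intro a b hab
    exact measure_mono fun x hx => lt_of_le_of_lt hab hx
  rw [← lintegral_const_mul _ (hm f), ← lintegral_const_mul _ (hm g),
    ← lintegral_add_left ((hm f).const_mul _)]
  refine setLIntegral_mono (hm h) ?_
  intro s hs
  rcases lt_or_ge s 1 with hs1 | hs1
  · refine oneD_meas (measurableSet_lt measurable_const hf) (measurableSet_lt measurable_const hg)
      (hfs s hs1) (hgs s hs1) ht0 ht1 ?_
    intro x hx y hy
    refine lt_of_lt_of_le ?_ (H x y)
    have hs0 : 0 < s := hs
    have e1 : s ^ (1 - t) < f x ^ (1 - t) := Real.rpow_lt_rpow hs0.le hx (by linarith)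
    have e2 : s ^ t < g y ^ t := Real.rpow_lt_rpow hs0.le hy (by linarith)
    calc s = s ^ (1 - t) * s ^ t := by rw [← Real.rpow_add hs0]; simp
      _ < _ := by
        have := Real.rpow_pos_of_pos hs0 t
        have := Real.rpow_pos_of_pos hs0 (1 - t)
        nlinarith
  · have e1 : {a | s < f a} = ∅ := by
      ext x; simpa using (hf1 x).trans hs1
    have e2 : {a | s < g a} = ∅ := by
      ext x; simpa using (hg1 x).trans hs1
    simp [e1, e2]

lemma pl_one {f g h : ℝ → ℝ} (hf : Measurable f) (hg : Measurable g) (hh : Measurable h)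
    (hf0 : ∀ x, 0 ≤ f x) (hg0 : ∀ x, 0 ≤ g x) (hh0 : ∀ x, 0 ≤ h x)
    (hfb : BddAbove (range f)) (hgb : BddAbove (range g))
    {t : ℝ} (ht0 : 0 < t) (ht1 : t < 1)
    (H : ∀ x y, f x ^ (1 - t) * g y ^ t ≤ h ((1 - t) * x + t * y)) :
    (∫⁻ x, ENNReal.ofReal (f x)) ^ (1 - t) * (∫⁻ x, ENNReal.ofReal (g x)) ^ t
      ≤ ∫⁻ x, ENNReal.ofReal (h x) := by
  have h1 : 0 < 1 - t := by linarith
  have triv : ∀ u : ℝ → ℝ, (∀ x, 0 ≤ u x) → BddAbove (range u) → (⨆ x, u x) ≤ 0 → 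
      ∫⁻ x, ENNReal.ofReal (u x) = 0 := by
    intro u hu hb h0
    have : ∀ x, ENNReal.ofReal (u x) = 0 := fun x => by
      rw [ENNReal.ofReal_eq_zero]; exact (le_ciSup hb x).trans h0
    simp [this]
  rcases le_or_gt (⨆ x, f x) 0 with hF | hF
  · rw [triv f hf0 hfb hF, ENNReal.zero_rpow_of_pos h1]; simp
  rcases le_or_gt (⨆ x, g x) 0 with hG | hG
  · rw [triv g hg0 hgb hG, ENNReal.zero_rpow_of_pos ht0]; simp
  set F := ⨆ x, f x
  set G := ⨆ x, g x
  set M := F ^ (1 - t) * G ^ t with hM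
  have hM0 : 0 < M := by positivity
  have key := pl_norm (f := fun x => f x / F) (g := fun x => g x / G) (h := fun x => h x / M)
    (hf.div_const _) (hg.div_const _) (hh.div_const _) (fun x => div_nonneg (hf0 x) hF.le)
    (fun x => div_nonneg (hg0 x) hG.le) (fun x => div_nonneg (hh0 x) hM0.le)
    (fun x => (div_le_one hF).2 (le_ciSup hfb x)) (fun x => (div_le_one hG).2 (le_ciSup hgb x))
    (fun s hs => by
      obtain ⟨x, hx⟩ := exists_lt_of_lt_ciSup (show s * F < F by nlinarith)
      exact ⟨x, (lt_div_iff₀ hF).2 hx⟩)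
    (fun s hs => by
      obtain ⟨x, hx⟩ := exists_lt_of_lt_ciSup (show s * G < G by nlinarith)
      exact ⟨x, (lt_div_iff₀ hG).2 hx⟩) ht0 ht1
    (fun x y => by
      rw [Real.div_rpow (hf0 x) hF.le, Real.div_rpow (hg0 y) hG.le, div_mul_div_comm]
      exact div_le_div_of_nonneg_right (H x y) hM0.le)
  have := (ennreal_amgm _ _ ht0 ht1).trans key
  have dv : ∀ (u : ℝ → ℝ) (c : ℝ), 0 < c → Measurable u → 
      ∫⁻ x, ENNReal.ofReal (u x / c) = (∫⁻ x, ENNReal.ofReal (u x)) * (ENNReal.ofReal c)⁻¹ := by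
    intro u c hc hu
    rw [← lintegral_mul_const _ hu.ennreal_ofReal]
    congr 1; ext x
    rw [ENNReal.ofReal_div_of_pos hc, div_eq_mul_inv]
  rw [dv f F hF hf, dv g G hG hg, dv h M hM0 hh, ENNReal.mul_rpow_of_nonneg _ _ h1.le,
    ENNReal.mul_rpow_of_nonneg _ _ ht0.le, ENNReal.inv_rpow, ENNReal.inv_rpow,
    ENNReal.ofReal_rpow_of_pos hF, ENNReal.ofReal_rpow_of_pos hG] at this
  have hMM : ENNReal.ofReal M = ENNReal.ofReal (F ^ (1 - t)) * ENNReal.ofReal (G ^ t) := by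
    rw [hM, ENNReal.ofReal_mul (by positivity)]
  have hMi : (ENNReal.ofReal M)⁻¹ = (ENNReal.ofReal (F ^ (1 - t)))⁻¹ * (ENNReal.ofReal (G ^ t))⁻¹ := by
    rw [hMM, ENNReal.mul_inv (by simp) (by simp)]
  rw [mul_mul_mul_comm, ← hMi] at this
  have hne : ENNReal.ofReal M ≠ 0 := by simpa using hM0
  exact (ENNReal.mul_le_mul_iff_left (by simp) (by simpa using hM0)).1 this
end part1

section part2
open MeasureTheory Metric Set
open scoped ENNReal RealInnerProductSpace Pointwise

/-- multiplicative Brunn-Minkowski property -/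
def BMprop {E : Type*} [NormedAddCommGroup E] [NormedSpace ℝ E] [MeasurableSpace E]
    (μ : Measure E) : Prop :=
  ∀ A B : Set E, IsCompact A → IsCompact B → ∀ t : ℝ, 0 < t → t < 1 →
    μ A ^ (1 - t) * μ B ^ t ≤ μ ((1 - t) • A + t • B)

lemma BM_prod {F : Type*} [NormedAddCommGroup F] [NormedSpace ℝ F] [MeasurableSpace F]
    [BorelSpace F] [FiniteDimensional ℝ F] {ν : Measure F} [ν.IsAddHaarMeasure] (h : BMprop ν) :
    BMprop ((volume : Measure ℝ).prod ν) := by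
  intro A B hA hB t ht0 ht1
  have h1 : 0 < 1 - t := by linarith
  have hC : IsCompact ((1 - t) • A + t • B) := (hA.smul _).add (hB.smul _)
  set C := (1 - t) • A + t • B
  have sec : ∀ S : Set (ℝ × F), IsCompact S → ∀ x, IsCompact (Prod.mk x ⁻¹' S) := by
    intro S hS x
    have : Prod.mk x ⁻¹' S = Prod.snd '' (S ∩ {p | p.1 = x}) := by
      ext y; simp
    rw [this]
    exact (hS.inter_right (isClosed_eq continuous_fst continuous_const)).image continuous_snd
  have fin : ∀ S : Set (ℝ × F), IsCompact S → ∀ x, ν (Prod.mk x ⁻¹' S) ≠ ∞ := fun S hS x =>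
    (sec S hS x).measure_lt_top.ne
  have meas : ∀ S : Set (ℝ × F), IsCompact S → Measurable (fun x => (ν (Prod.mk x ⁻¹' S)).toReal) :=
    fun S hS => (measurable_measure_prodMk_left hS.measurableSet).ennreal_toReal
  have bdd : ∀ S : Set (ℝ × F), IsCompact S →
      BddAbove (range (fun x => (ν (Prod.mk x ⁻¹' S)).toReal)) := by
    intro S hS
    refine ⟨(ν (Prod.snd '' S)).toReal, ?_⟩
    rintro _ ⟨x, rfl⟩
    refine ENNReal.toReal_mono (hS.image continuous_snd).measure_lt_top.ne (measure_mono ?_)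
    intro y hy
    exact ⟨_, hy, rfl⟩
  have int : ∀ S : Set (ℝ × F), IsCompact S →
      (volume.prod ν) S = ∫⁻ x, ENNReal.ofReal ((ν (Prod.mk x ⁻¹' S)).toReal) := by
    intro S hS
    rw [Measure.prod_apply hS.measurableSet]
    congr 1; ext x
    rw [ENNReal.ofReal_toReal (fin S hS x)]
  rw [int A hA, int B hB, int C hC]
  refine pl_one (meas A hA) (meas B hB) (meas C hC) (fun _ => ENNReal.toReal_nonneg)
    (fun _ => ENNReal.toReal_nonneg) (fun _ => ENNReal.toReal_nonneg) (bdd A hA) (bdd B hB)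
    ht0 ht1 ?_
  intro x y
  rw [ENNReal.toReal_rpow, ENNReal.toReal_rpow, ← ENNReal.toReal_mul]
  refine ENNReal.toReal_mono (fin C hC _) ((h _ _ (sec A hA x) (sec B hB y) t ht0 ht1).trans
    (measure_mono ?_))
  rintro _ ⟨_, ⟨a, ha, rfl⟩, _, ⟨b, hb, rfl⟩, rfl⟩
  exact ⟨_, ⟨_, ha, rfl⟩, _, ⟨_, hb, rfl⟩, by simp⟩

lemma BM_transfer {E E' : Type*} [NormedAddCommGroup E] [NormedSpace ℝ E] [MeasurableSpace E]
    [BorelSpace E] [FiniteDimensional ℝ E] {μ : Measure E} [μ.IsAddHaarMeasure]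
    [NormedAddCommGroup E'] [NormedSpace ℝ E'] [MeasurableSpace E']
    [BorelSpace E'] [FiniteDimensional ℝ E'] (e : E ≃L[ℝ] E') (h : BMprop μ)
    (μ' : Measure E') [μ'.IsAddHaarMeasure] : BMprop μ' := by
  intro A B hA hB t ht0 ht1
  have h1 : 0 < 1 - t := by linarith
  have : (μ.map e).IsAddHaarMeasure := e.isAddHaarMeasure_map μ
  rw [Measure.isAddLeftInvariant_eq_smul μ' (μ.map e)]
  set c := μ'.addHaarScalarFactor (μ.map e)
  have ap : ∀ S : Set E', (μ.map e) S = μ (e ⁻¹' S) := fun S =>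
    e.toHomeomorph.toMeasurableEquiv.map_apply S
  simp only [Measure.smul_apply, ap]
  have h2 := h _ _ (e.toHomeomorph.isCompact_preimage.2 hA) (e.toHomeomorph.isCompact_preimage.2 hB) t ht0 ht1
  have pre : e ⁻¹' ((1 - t) • A + t • B) = (1 - t) • (e ⁻¹' A) + t • (e ⁻¹' B) := by
    ext x
    constructor
    · rintro ⟨_, ⟨a, ha, rfl⟩, _, ⟨b, hb, rfl⟩, hx⟩
      refine ⟨_, ⟨e.symm a, by simpa using ha, rfl⟩, _, ⟨e.symm b, by simpa using hb, rfl⟩, ?_⟩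
      apply e.injective
      simpa using hx
    · rintro ⟨_, ⟨a, ha, rfl⟩, _, ⟨b, hb, rfl⟩, rfl⟩
      exact ⟨_, ⟨e a, ha, rfl⟩, _, ⟨e b, hb, rfl⟩, by simp⟩
  rw [pre]
  simp only [ENNReal.smul_def, smul_eq_mul]
  rw [ENNReal.mul_rpow_of_nonneg _ _ h1.le, ENNReal.mul_rpow_of_nonneg _ _ ht0.le,
    mul_mul_mul_comm]
  by_cases hc : (c : ℝ≥0∞) = 0
  · simp [hc, ENNReal.zero_rpow_of_pos ht0]
  rw [← ENNReal.rpow_add _ _ hc (by simp)]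
  simp only [sub_add_cancel, ENNReal.rpow_one]
  gcongr
  exact h2

lemma BM_pi (d : ℕ) : BMprop (volume : Measure (Fin d → ℝ)) := by
  induction d with
  | zero =>
    intro A B hA hB t ht0 ht1
    have h1 : 0 < 1 - t := by linarith
    rcases A.eq_empty_or_nonempty with rfl | hA0
    · simp [ENNReal.zero_rpow_of_pos h1]
    rcases B.eq_empty_or_nonempty with rfl | hB0
    · simp [ENNReal.zero_rpow_of_pos ht0]
    rw [Subsingleton.eq_univ_of_nonempty hA0, Subsingleton.eq_univ_of_nonempty hB0,
      Subsingleton.eq_univ_of_nonempty (s := (1 - t) • (univ : Set (Fin 0 → ℝ)) + t • univ)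
        (univ_nonempty.smul_set.add univ_nonempty.smul_set)]
    simp [volume_pi]
  | succ d ih =>
    have e : (ℝ × (Fin d → ℝ)) ≃L[ℝ] (Fin (d + 1) → ℝ) :=
      ContinuousLinearEquiv.ofFinrankEq (by simp [add_comm])
    exact BM_transfer e (BM_prod ih) _

lemma BM {E : Type*} [NormedAddCommGroup E] [NormedSpace ℝ E] [MeasurableSpace E]
    [BorelSpace E] [FiniteDimensional ℝ E] (μ : Measure E) [μ.IsAddHaarMeasure] : BMprop μ :=
  BM_transfer (ContinuousLinearEquiv.ofFinrankEq (by simp)) (BM_pi (Module.finrank ℝ E)) μ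
end part2

section part3
open MeasureTheory Metric Set
open scoped ENNReal RealInnerProductSpace Pointwise

lemma subgrad {V : Type*} [NormedAddCommGroup V] [NormedSpace ℝ V] [FiniteDimensional ℝ V]
    {U : Set V} (hU : IsOpen U) (h0 : (0 : V) ∈ U) {φ : V → ℝ} (hφ : ConvexOn ℝ U φ) :
    ∃ l : V →L[ℝ] ℝ, ∀ a ∈ U, φ 0 + l a ≤ φ a := by
  have hc := hφ.continuousOn hU
  have ho : IsOpen {p : V × ℝ | p.1 ∈ U ∧ φ p.1 < p.2} := by
    have : {p : V × ℝ | p.1 ∈ U ∧ φ p.1 < p.2} = (Prod.fst ⁻¹' U) ∩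
        (fun p : V × ℝ => φ p.1 - p.2) ⁻¹' (Iio 0) := by
      ext p; simp
    rw [this]
    refine ContinuousOn.isOpen_inter_preimage ?_ (hU.preimage continuous_fst) isOpen_Iio
    exact (hc.comp continuousOn_fst (fun p hp => hp)).sub continuousOn_snd
  obtain ⟨f, hf⟩ := geometric_hahn_banach_open_point hφ.convex_strict_epigraph ho
    (x := ((0 : V), φ 0)) (by simp)
  have dec : ∀ a s, f (a, s) = f (a, 0) + s * f (0, 1) := by
    intro a s
    have : ((a, s) : V × ℝ) = (a, 0) + s • (0, 1) := by simp
    rw [this, map_add, map_smul, smul_eq_mul]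
  set c := f (0, 1) with hcdef
  have hneg : c < 0 := by
    have := hf (0, φ 0 + 1) ⟨h0, by simp⟩
    rw [dec, dec 0 (φ 0)] at this
    linarith
  refine ⟨(-c)⁻¹ • (f.comp (ContinuousLinearMap.inl ℝ V ℝ)), fun a ha => ?_⟩
  simp only [_root_.smul_apply, ContinuousLinearMap.comp_apply,
    ContinuousLinearMap.inl_apply, smul_eq_mul]
  have key : ∀ s, φ a < s → f (a, 0) + s * c ≤ φ 0 * c := by
    intro s hs
    have := hf (a, s) ⟨ha, hs⟩
    rw [dec, dec 0 (φ 0)] at this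
    have e : f ((0 : V), (0 : ℝ)) = 0 := by
      have : ((0 : V), (0 : ℝ)) = 0 := rfl
      rw [this, map_zero]
    linarith
  have hcc : 0 < -c := by linarith
  refine le_of_forall_gt_imp_ge_of_dense fun s hs => ?_
  have := key s hs
  rw [← sub_nonneg] at this ⊢
  have e : s - (φ 0 + (-c)⁻¹ * f (a, 0)) = (-c)⁻¹ * (φ 0 * c - (f (a, 0) + s * c)) := by
    have hc0 : c ≠ 0 := hneg.ne
    field_simp
    ring
  rw [e]
  positivity

lemma subgrad_inv {V : Type*} [NormedAddCommGroup V] [NormedSpace ℝ V] [FiniteDimensional ℝ V]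
    {U : Set V} (hU : IsOpen U) (hUc : Convex ℝ U) (h0 : (0 : V) ∈ U) {v : V → ℝ}
    (hv : ∀ a ∈ U, 0 < v a)
    (hlc : ∀ a ∈ U, ∀ b ∈ U, ∀ t : ℝ, 0 < t → t < 1 →
      v a ^ (1 - t) * v b ^ t ≤ v ((1 - t) • a + t • b)) :
    ∃ l : V →L[ℝ] ℝ, ∀ a ∈ U, (v 0)⁻¹ + l a ≤ (v a)⁻¹ := by
  refine subgrad hU h0 (φ := fun a => (v a)⁻¹) (convexOn_iff_forall_pos.2 ⟨hUc, ?_⟩)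
  intro a ha b hb s t hs ht hst
  have hs' : s = 1 - t := by linarith
  subst hs'
  have h1 := hlc a ha b hb t ht (by linarith)
  have p1 := Real.rpow_pos_of_pos (hv a ha) (1 - t)
  have p2 := Real.rpow_pos_of_pos (hv b hb) t
  have h2 := Real.geom_mean_le_arith_mean2_weighted hs.le ht.le (inv_nonneg.2 (hv a ha).le)
    (inv_nonneg.2 (hv b hb).le) hst
  rw [Real.inv_rpow (hv a ha).le, Real.inv_rpow (hv b hb).le, ← mul_inv] at h2
  exact (inv_anti₀ (by positivity) h1).trans (by simpa using h2)

lemma jensen_low {X V : Type*} [MeasurableSpace X] [NormedAddCommGroup V] [NormedSpace ℝ V]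
    [CompleteSpace V] (m : Measure X) [IsFiniteMeasure m] {g : X → V} (hg : Integrable g m)
    (l : V →L[ℝ] ℝ) {c : ℝ} {w : X → ℝ≥0∞}
    (h : ∀ᵐ x ∂m, ENNReal.ofReal (c + l (g x)) ≤ w x) :
    ENNReal.ofReal (c * m.real univ + l (∫ x, g x ∂m)) ≤ ∫⁻ x, w x ∂m := by
  have hi : Integrable (fun x => c + l (g x)) m := (integrable_const c).add (l.integrable_comp hg)
  have e : ∫ x, (c + l (g x)) ∂m = c * m.real univ + l (∫ x, g x ∂m) := by
    rw [integral_add (integrable_const c) (l.integrable_comp hg), integral_const,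
      l.integral_comp_comm hg, smul_eq_mul, mul_comm]
  rw [← e]
  refine le_trans ?_ (lintegral_mono_ae h)
  calc ENNReal.ofReal (∫ x, (c + l (g x)) ∂m)
      ≤ ENNReal.ofReal (∫ x, max (c + l (g x)) 0 ∂m) := by
        apply ENNReal.ofReal_le_ofReal
        exact integral_mono hi hi.pos_part (fun x => le_max_left _ _)
    _ = ∫⁻ x, ENNReal.ofReal (max (c + l (g x)) 0) ∂m :=
        ofReal_integral_eq_lintegral_ofReal hi.pos_part
          (Filter.Eventually.of_forall fun x => le_max_right _ _)
    _ ≤ _ := lintegral_mono fun x => by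
        rcases le_total (c + l (g x)) 0 with h | h
        · simp [h]
        · rw [max_eq_left h]

variable {E : Type*} [NormedAddCommGroup E] [NormedSpace ℝ E] [MeasurableSpace E]
    [BorelSpace E] [FiniteDimensional ℝ E] (μ : Measure E) [μ.IsAddHaarMeasure]
  {F : Type*} [NormedAddCommGroup F] [NormedSpace ℝ F] [MeasurableSpace F]
    [BorelSpace F] [FiniteDimensional ℝ F] (ν : Measure F) [ν.IsAddHaarMeasure]

lemma conv_weight {A B : Set E} (hA : MeasurableSet A) (hB : MeasurableSet B) {w : E → ℝ≥0∞}
    (hw : Measurable w) :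
    ∫⁻ x in A, ∫⁻ y in B, w (x + y) ∂μ ∂μ = ∫⁻ h, w h * μ (A ∩ {x | h - x ∈ B}) ∂μ := by
  have e1 : ∀ x, ∫⁻ y in B, w (x + y) ∂μ = ∫⁻ h, B.indicator 1 (h - x) * w h ∂μ := by
    intro x
    rw [← lintegral_indicator hB, ← lintegral_add_left_eq_self (fun h => B.indicator 1 (h - x) * w h) x]
    congr 1; ext y
    by_cases hy : y ∈ B <;> simp [hy]
  simp_rw [e1]
  rw [← lintegral_indicator hA]
  have e2 : ∀ x, A.indicator (fun x => ∫⁻ h, B.indicator 1 (h - x) * w h ∂μ) x =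
      ∫⁻ h, A.indicator 1 x * (B.indicator 1 (h - x) * w h) ∂μ := by
    intro x
    by_cases hx : x ∈ A <;> simp [hx]
  simp_rw [e2]
  have mA : Measurable (A.indicator (1 : E → ℝ≥0∞)) := measurable_one.indicator hA
  have mB : Measurable (B.indicator (1 : E → ℝ≥0∞)) := measurable_one.indicator hB
  rw [lintegral_lintegral_swap]
  · congr 1; ext h
    have hm : MeasurableSet (A ∩ {x | h - x ∈ B}) :=
      hA.inter (hB.preimage (measurable_const.sub measurable_id))
    rw [← lintegral_indicator_one hm, ← lintegral_const_mul _ (measurable_one.indicator hm)]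
    congr 1; ext x
    by_cases hx : x ∈ A <;> by_cases hy : h - x ∈ B <;> simp [hx, hy]
  · apply Measurable.aemeasurable
    simp only [Function.uncurry_def]
    exact (mA.comp measurable_fst).mul ((mB.comp (measurable_snd.sub measurable_fst)).mul
      (hw.comp measurable_snd))

lemma conv_one {A B : Set E} (hA : MeasurableSet A) (hB : MeasurableSet B) :
    ∫⁻ h, μ (A ∩ {x | h - x ∈ B}) ∂μ = μ A * μ B := by
  have := conv_weight μ hA hB (w := 1) measurable_one
  simp only [Pi.one_apply, one_mul] at this
  rw [← this]
  simp [mul_comm]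

/-- homothety -/
lemma meas_homothety (A : Set E) (a : E) {t : ℝ} (ht : 0 ≤ t) :
    μ ((fun x => a + t • x) '' A) = ENNReal.ofReal (t ^ Module.finrank ℝ E) * μ A := by
  have : (fun x => a + t • x) '' A = (fun x => a + x) '' (t • A) := by
    rw [← image_smul, image_image]
  rw [this, image_add_left, measure_preimage_add, Measure.addHaar_smul, abs_of_nonneg (by positivity)]

lemma rs1 {K : Set (E × F)} (hK : IsCompact K) (hc : Convex ℝ K) (y0 : E) {t : ℝ} (ht0 : 0 < t)
    (ht1 : t < 1) :
    ENNReal.ofReal (t ^ Module.finrank ℝ E * (1 - t) ^ Module.finrank ℝ F) *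
      (μ (Prod.fst '' K) * ν (Prod.mk y0 ⁻¹' K)) ≤ (μ.prod ν) K := by
  have h1 : 0 < 1 - t := by linarith
  rw [Measure.prod_apply hK.measurableSet]
  set S := (fun x => (1 - t) • y0 + t • x) '' (Prod.fst '' K)
  have hS : IsCompact S := (hK.image continuous_fst).image (by fun_prop)
  calc _ = ∫⁻ x in S, ENNReal.ofReal ((1 - t) ^ Module.finrank ℝ F) * ν (Prod.mk y0 ⁻¹' K) ∂μ := by
        rw [setLIntegral_const, meas_homothety μ _ _ ht0.le, ENNReal.ofReal_mul (by positivity)]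
        ring
    _ ≤ ∫⁻ x in S, ν (Prod.mk x ⁻¹' K) ∂μ := by
        refine setLIntegral_mono' hS.measurableSet ?_
        rintro _ ⟨_, ⟨p, hp, rfl⟩, rfl⟩
        rw [← meas_homothety ν _ (t • p.2) h1.le]
        apply measure_mono
        rintro _ ⟨z, hz, rfl⟩
        have := hc hz hp h1.le ht0.le (by ring)
        simp only [mem_preimage]
        convert this using 1
        ext <;> simp [add_comm]
    _ ≤ _ := setLIntegral_le_lintegral _ _

lemma rs_const {k m : ℕ} (hk : 1 ≤ k) (hm : 1 ≤ m) : ∃ t : ℝ, 0 < t ∧ t < 1 ∧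
    1 ≤ (Real.exp 1 * ((k + m : ℕ) : ℝ) / k) ^ k * (t ^ k * (1 - t) ^ m) := by
  have hk' : (0 : ℝ) < k := by exact_mod_cast hk
  have hm' : (0 : ℝ) < m := by exact_mod_cast hm
  refine ⟨k / (k + m), by positivity, by rw [div_lt_one (by positivity)]; linarith, ?_⟩
  have e : (1 : ℝ) - k / (k + m) = (m : ℝ) / (k + m) := by field_simp; ring
  rw [e]
  push_cast
  rw [← mul_assoc, ← mul_pow]
  have e2 : Real.exp 1 * ((k : ℝ) + m) / k * (k / (k + m)) = Real.exp 1 := by field_simp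
  rw [e2]
  have e3 : ((k : ℝ) + m) / m ≤ Real.exp (k / m) := by
    have := Real.add_one_le_exp ((k : ℝ) / m)
    have e : ((k : ℝ) + m) / m = k / m + 1 := by field_simp
    rw [e]; exact this
  have e4 : (((k : ℝ) + m) / m) ^ m ≤ Real.exp 1 ^ k := by
    calc _ ≤ Real.exp (k / m) ^ m := by gcongr
      _ = Real.exp 1 ^ k := by
        rw [← Real.exp_nat_mul, ← Real.exp_nat_mul]; congr 1; field_simp
  calc (1 : ℝ) = (((k : ℝ) + m) / m) ^ m * ((m : ℝ) / (k + m)) ^ m := by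
        rw [← mul_pow]; rw [div_mul_div_comm, mul_comm, div_self (by positivity), one_pow]
    _ ≤ _ := by gcongr

lemma rs1' {K : Set (E × F)} (hK : IsCompact K) (hc : Convex ℝ K) (y0 : E)
    (hE : 1 ≤ Module.finrank ℝ E) (hF : 1 ≤ Module.finrank ℝ F) :
    μ (Prod.fst '' K) * ν (Prod.mk y0 ⁻¹' K) ≤
      ENNReal.ofReal ((Real.exp 1 * ((Module.finrank ℝ E + Module.finrank ℝ F : ℕ) : ℝ) /
        Module.finrank ℝ E) ^ Module.finrank ℝ E) * (μ.prod ν) K := by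
  obtain ⟨t, ht0, ht1, ht⟩ := rs_const hE hF
  have := rs1 μ ν hK hc y0 ht0 ht1
  calc _ = 1 * (μ (Prod.fst '' K) * ν (Prod.mk y0 ⁻¹' K)) := by rw [one_mul]
    _ ≤ ENNReal.ofReal (_ * _) * (μ (Prod.fst '' K) * ν (Prod.mk y0 ⁻¹' K)) := by
        gcongr
        rw [ENNReal.one_le_ofReal]; exact ht
    _ ≤ _ := by
        rw [ENNReal.ofReal_mul (by positivity), mul_assoc]
        gcongr

lemma rs2 {A : Set E} (hA : IsCompact A) (hc : Convex ℝ A) :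
    μ (A - A) ≤ ENNReal.ofReal (4 ^ Module.finrank ℝ E) * μ A := by
  rcases A.eq_empty_or_nonempty with rfl | ⟨a0, ha0⟩
  · simp
  by_cases h0 : μ A = 0
  · have hi : interior A = ∅ := by
      by_contra h
      have := isOpen_interior.measure_pos μ (nonempty_iff_ne_empty.2 h)
      exact this.ne' (measure_mono_null interior_subset h0)
    have hs : affineSpan ℝ A ≠ ⊤ := by
      intro h
      rw [← hc.interior_nonempty_iff_affineSpan_eq_top] at h
      simp [hi] at h
    have hd : (affineSpan ℝ A).direction ≠ ⊤ := by
      intro h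
      exact hs ((AffineSubspace.direction_eq_top_iff_of_nonempty
        ⟨a0, subset_affineSpan ℝ A ha0⟩).1 h)
    have : A - A ⊆ ((affineSpan ℝ A).direction : Set E) := by
      rintro _ ⟨a, ha, b, hb, rfl⟩
      exact AffineSubspace.vsub_mem_direction (subset_affineSpan ℝ A ha) (subset_affineSpan ℝ A hb)
    rw [measure_mono_null this (Measure.addHaar_submodule μ _ hd)]
    simp
  have hfin : μ A ≠ ∞ := hA.measure_lt_top.ne
  have hconv := conv_one μ hA.measurableSet hA.neg.measurableSet
  rw [Measure.measure_neg] at hconv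
  have hD : IsCompact (A - A) := by
    rw [sub_eq_add_neg]; exact hA.add hA.neg
  set S := (fun x => (0 : E) + (1 / 2 : ℝ) • x) '' (A - A)
  have hS : IsCompact S := hD.image (by fun_prop)
  have low : ENNReal.ofReal ((1 / 2) ^ Module.finrank ℝ E) * μ A *
      (ENNReal.ofReal ((1 / 2) ^ Module.finrank ℝ E) * μ (A - A)) ≤ μ A * μ A := by
    rw [← hconv, ← meas_homothety μ (A - A) 0 (by norm_num)]
    calc _ = ∫⁻ h in S, ENNReal.ofReal ((1 / 2) ^ Module.finrank ℝ E) * μ A ∂μ := by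
          rw [setLIntegral_const]
      _ ≤ ∫⁻ h in S, μ (A ∩ {x | h - x ∈ -A}) ∂μ := by
          refine setLIntegral_mono' hS.measurableSet ?_
          rintro _ ⟨_, ⟨a, ha, b, hb, rfl⟩, rfl⟩
          rw [← meas_homothety μ A ((1 / 2 : ℝ) • a) (by norm_num)]
          apply measure_mono
          rintro _ ⟨x, hx, rfl⟩
          refine ⟨hc ha hx (by norm_num) (by norm_num) (by norm_num), ?_⟩
          have := hc hb hx (a := 1 / 2) (b := 1 / 2) (by norm_num) (by norm_num) (by norm_num)
          simp only [mem_ofPred_eq, Set.mem_neg]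
          convert this using 1
          module
      _ ≤ _ := setLIntegral_le_lintegral _ _
  have low2 : ENNReal.ofReal ((1 / 2) ^ Module.finrank ℝ E) *
      (ENNReal.ofReal ((1 / 2) ^ Module.finrank ℝ E) * μ (A - A)) ≤ μ A := by
    refine (ENNReal.mul_le_mul_iff_right h0 hfin).1 (le_trans (le_of_eq ?_) low)
    ring
  rw [← mul_assoc, ← ENNReal.ofReal_mul (by positivity), ← mul_pow] at low2
  calc μ (A - A) = ENNReal.ofReal (4 ^ Module.finrank ℝ E) *
        (ENNReal.ofReal ((1 / 2 * (1 / 2)) ^ Module.finrank ℝ E) * μ (A - A)) := by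
        rw [← mul_assoc, ← ENNReal.ofReal_mul (by positivity), ← mul_pow]; norm_num
    _ ≤ _ := by gcongr
end part3

section part4
open MeasureTheory Metric Set
open scoped ENNReal RealInnerProductSpace Pointwise

variable {E : Type*} [NormedAddCommGroup E] [NormedSpace ℝ E] [MeasurableSpace E]
    [BorelSpace E] [FiniteDimensional ℝ E] (μ : Measure E) [μ.IsAddHaarMeasure]
  {F : Type*} [NormedAddCommGroup F] [NormedSpace ℝ F] [MeasurableSpace F]
    [BorelSpace F] [FiniteDimensional ℝ F] (ν : Measure F) [ν.IsAddHaarMeasure]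

lemma half_bm {A B C : Set F} (hA : IsCompact A) (hB : IsCompact B)
    (h : ∀ a ∈ A, ∀ b ∈ B, (1 / 2 : ℝ) • a + (1 / 2 : ℝ) • b ∈ C) (hAB : ν A = ν B) :
    ν A ≤ ν C := by
  have := BM ν A B hA hB (1 / 2) (by norm_num) (by norm_num)
  rw [← hAB] at this
  have e : ν A ^ (1 - 1 / 2 : ℝ) * ν A ^ (1 / 2 : ℝ) = ν A := by
    rw [← ENNReal.rpow_add_of_nonneg _ _ (by norm_num) (by norm_num)]; norm_num
  rw [e] at this
  refine this.trans (measure_mono ?_)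
  rintro _ ⟨_, ⟨a, ha, rfl⟩, _, ⟨b, hb, rfl⟩, rfl⟩
  have := h a ha b hb
  norm_num at this ⊢
  exact this

lemma section_compact {X Y : Type*} [TopologicalSpace X] [TopologicalSpace Y] [T1Space X]
    {S : Set (X × Y)} (hS : IsCompact S) (x : X) : IsCompact (Prod.mk x ⁻¹' S) := by
  have : Prod.mk x ⁻¹' S = Prod.snd '' (S ∩ Prod.fst ⁻¹' {x}) := by
    ext y; simp
  rw [this]
  exact (hS.inter_right (isClosed_singleton.preimage continuous_fst)).image continuous_snd

lemma refl_compact {X : Type*} [NormedAddCommGroup X] {K : Set X} (hK : IsCompact K) (a : X) :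
    IsCompact (K ∩ {p | a - p ∈ K}) :=
  hK.inter_right (hK.isClosed.preimage (continuous_const.sub continuous_id))

lemma case1_fib {K : Set (E × F)} (hK : IsCompact K) (hc : Convex ℝ K) (a : E × F) :
    (μ.prod ν) (K ∩ {p | a - p ∈ K}) ≤ μ (Prod.fst '' (K ∩ {p | a - p ∈ K})) *
      ν ((Prod.mk ((1 / 2 : ℝ) • a.1) ⁻¹' K) ∩ {z | a.2 - z ∈ Prod.mk ((1 / 2 : ℝ) • a.1) ⁻¹' K}) := by
  have hD := refl_compact hK a
  set D := K ∩ {p | a - p ∈ K} with hDdef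
  rw [Measure.prod_apply hD.measurableSet]
  set N := ν ((Prod.mk ((1 / 2 : ℝ) • a.1) ⁻¹' K) ∩
    {z | a.2 - z ∈ Prod.mk ((1 / 2 : ℝ) • a.1) ⁻¹' K})
  have key : ∀ x, ν (Prod.mk x ⁻¹' D) ≤ (Prod.fst '' D).indicator (fun _ => N) x := by
    intro x
    by_cases hx : x ∈ Prod.fst '' D
    · rw [indicator_of_mem hx]
      refine half_bm ν (B := Prod.mk (a.1 - x) ⁻¹' D) (section_compact hD x)
        (section_compact hD _) ?_ ?_
      · intro z hz z' hz'
        have h1 := hc hz.1 hz'.1 (a := 1 / 2) (b := 1 / 2) (by norm_num) (by norm_num) (by norm_num)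
        have h2 := hc hz.2 hz'.2 (a := 1 / 2) (b := 1 / 2) (by norm_num) (by norm_num) (by norm_num)
        constructor
        · simp only [mem_preimage]
          convert h1 using 1
          ext <;> simp <;> module
        · simp only [mem_preimage, mem_ofPred_eq]
          convert h2 using 1
          ext <;> simp <;> module
      · have : Prod.mk (a.1 - x) ⁻¹' D = (fun z => a.2 - z) ⁻¹' (Prod.mk x ⁻¹' D) := by
          ext z
          have e1 : a - (a.1 - x, z) = (x, a.2 - z) := by ext <;> simp
          have e2 : a - (x, a.2 - z) = (a.1 - x, z) := by ext <;> simp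
          simp only [hDdef, mem_preimage, mem_inter_iff, mem_ofPred_eq, e1, e2, and_comm]
        rw [this]
        exact ((Measure.measurePreserving_sub_left ν a.2).measure_preimage
          (section_compact hD x).measurableSet.nullMeasurableSet).symm
    · have : Prod.mk x ⁻¹' D = ∅ := by
        ext z; simp only [mem_preimage, mem_empty_iff_false, iff_false]
        exact fun h => hx ⟨_, h, rfl⟩
      simp [this]
  calc _ ≤ ∫⁻ x, (Prod.fst '' D).indicator (fun _ => N) x ∂μ := lintegral_mono key
    _ = _ := by
      rw [lintegral_indicator (hD.image continuous_fst).measurableSet, setLIntegral_const, mul_comm]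

lemma case1_int {K : Set (E × F)} (hK : IsCompact K) :
    ∫⁻ a : E × F, ν ((Prod.mk ((1 / 2 : ℝ) • a.1) ⁻¹' K) ∩
      {z | a.2 - z ∈ Prod.mk ((1 / 2 : ℝ) • a.1) ⁻¹' K}) ∂(μ.prod ν) ≤
    ENNReal.ofReal (2 ^ Module.finrank ℝ E) * ∫⁻ y, ν (Prod.mk y ⁻¹' K) * ν (Prod.mk y ⁻¹' K) ∂μ := by
  refine (lintegral_prod_le _).trans ?_
  have hs : ∀ y, MeasurableSet (Prod.mk y ⁻¹' K) := fun y => (section_compact hK y).measurableSet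
  simp only []
  have : ∀ x : E, ∫⁻ b : F, ν ((Prod.mk ((1 / 2 : ℝ) • x) ⁻¹' K) ∩
      {z | b - z ∈ Prod.mk ((1 / 2 : ℝ) • x) ⁻¹' K}) ∂ν =
      (fun y => ν (Prod.mk y ⁻¹' K) * ν (Prod.mk y ⁻¹' K)) ((1 / 2 : ℝ) • x) :=
    fun x => conv_one ν (hs _) (hs _)
  simp_rw [this]
  have hm : Measurable (fun y => ν (Prod.mk y ⁻¹' K) * ν (Prod.mk y ⁻¹' K)) :=
    (measurable_measure_prodMk_left hK.measurableSet).mul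
      (measurable_measure_prodMk_left hK.measurableSet)
  have hmap := Measure.map_addHaar_smul μ (r := (1 / 2 : ℝ)) (by norm_num)
  have e := lintegral_map (μ := μ) hm (measurable_const_smul (1 / 2 : ℝ))
  rw [← e]
  have hmap' : Measure.map (fun x : E => (1 / 2 : ℝ) • x) μ =
    ENNReal.ofReal |((1 / 2 : ℝ) ^ Module.finrank ℝ E)⁻¹| • μ := hmap
  rw [hmap', lintegral_smul_measure, smul_eq_mul]
  gcongr
  rw [← inv_pow]; norm_num

lemma case1_lc {K : Set (E × F)} (hK : IsCompact K) (hc : Convex ℝ K) (a b : E × F) (t : ℝ)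
    (ht0 : 0 < t) (ht1 : t < 1) :
    μ (Prod.fst '' (K ∩ {p | a - p ∈ K})) ^ (1 - t) * μ (Prod.fst '' (K ∩ {p | b - p ∈ K})) ^ t ≤
      μ (Prod.fst '' (K ∩ {p | ((1 - t) • a + t • b) - p ∈ K})) := by
  refine (BM μ _ _ ((refl_compact hK a).image continuous_fst)
    ((refl_compact hK b).image continuous_fst) t ht0 ht1).trans (measure_mono ?_)
  rintro _ ⟨_, ⟨_, ⟨p, hp, rfl⟩, rfl⟩, _, ⟨_, ⟨q, hq, rfl⟩, rfl⟩, rfl⟩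
  refine ⟨(1 - t) • p + t • q, ⟨hc hp.1 hq.1 (by linarith) ht0.le (by ring), ?_⟩, by simp⟩
  have := hc hp.2 hq.2 (a := 1 - t) (b := t) (by linarith) ht0.le (by ring)
  simp only [mem_ofPred_eq]
  convert this using 1
  module

lemma case1_meas {K : Set (E × F)} (hK : IsCompact K) :
    Measurable (fun a : E × F => μ (Prod.fst '' (K ∩ {p | a - p ∈ K}))) := by
  have hT : IsCompact ((fun pq : (E × F) × (E × F) => (pq.1 + pq.2, pq.1.1)) '' (K ×ˢ K)) :=
    (hK.prod hK).image (by fun_prop)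
  have := measurable_measure_prodMk_left (ν := μ) hT.measurableSet
  convert this using 3 with a
  ext x
  constructor
  · rintro ⟨p, hp, rfl⟩
    exact ⟨(p, a - p), ⟨hp.1, hp.2⟩, by simp⟩
  · rintro ⟨⟨p, q⟩, ⟨hp, hq⟩, h⟩
    simp only [Prod.mk.injEq] at h
    refine ⟨p, ⟨hp, ?_⟩, h.2⟩
    have : a - p = q := by rw [← h.1]; simp
    simpa [this] using hq

lemma case1_main {K : Set (E × F)} (hK : IsCompact K) (hc : Convex ℝ K)
    (h0 : (0 : E × F) ∈ interior K) (hb : ∫ p in K, p ∂(μ.prod ν) = 0)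
    (hE : 1 ≤ Module.finrank ℝ E) (hF : 1 ≤ Module.finrank ℝ F) :
    μ (Prod.fst '' K) ≤ ENNReal.ofReal (2 ^ Module.finrank ℝ E) *
      ENNReal.ofReal ((Real.exp 1 * ((Module.finrank ℝ E + Module.finrank ℝ F : ℕ) : ℝ) /
        Module.finrank ℝ E) ^ Module.finrank ℝ E) * μ (Prod.fst '' (K ∩ -K)) := by
  set R := ENNReal.ofReal ((Real.exp 1 * ((Module.finrank ℝ E + Module.finrank ℝ F : ℕ) : ℝ) /
        Module.finrank ℝ E) ^ Module.finrank ℝ E) with hR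
  set V : E × F → ℝ≥0∞ := fun a => μ (Prod.fst '' (K ∩ {p | a - p ∈ K})) with hV
  have hV0 : V 0 = μ (Prod.fst '' (K ∩ -K)) := by
    simp only [hV, zero_sub]; rfl
  rw [← hV0]
  set ρ := μ.prod ν
  have hVfin : ∀ a, V a ≠ ∞ := fun a => ((refl_compact hK a).image continuous_fst).measure_lt_top.ne
  set U : Set (E × F) := (fun a => (1 / 2 : ℝ) • a) ⁻¹' interior K with hUdef
  have hUo : IsOpen U := isOpen_interior.preimage (by fun_prop)
  have hUc : Convex ℝ U := by
    have := hc.interior.linear_preimage ((1 / 2 : ℝ) • (LinearMap.id : (E × F) →ₗ[ℝ] (E × F)))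
    exact this
  have hU0 : (0 : E × F) ∈ U := by simpa [hUdef] using h0
  have hVpos : ∀ a ∈ U, 0 < V a := by
    intro a ha
    have ho : IsOpen (interior K ∩ (fun p => a - p) ⁻¹' interior K) :=
      isOpen_interior.inter (isOpen_interior.preimage (by fun_prop))
    have ho2 : IsOpen (Prod.fst '' (interior K ∩ (fun p => a - p) ⁻¹' interior K)) :=
      isOpenMap_fst _ ho
    have hne : (Prod.fst '' (interior K ∩ (fun p => a - p) ⁻¹' interior K)).Nonempty := by
      refine ⟨_, ⟨(1 / 2 : ℝ) • a, ⟨ha, ?_⟩, rfl⟩⟩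
      have e : a - (1 / 2 : ℝ) • a = (1 / 2 : ℝ) • a := by module
      simp only [mem_preimage, e]
      exact ha
    refine (ho2.measure_pos μ hne).trans_le (measure_mono (image_mono ?_))
    exact inter_subset_inter interior_subset (fun p hp => (interior_subset hp : a - p ∈ K))
  obtain ⟨l, hl⟩ := subgrad_inv hUo hUc hU0 (v := fun a => (V a).toReal)
    (fun a ha => ENNReal.toReal_pos (hVpos a ha).ne' (hVfin a)) (by
      intro a _ b _ t ht0 ht1
      rw [ENNReal.toReal_rpow, ENNReal.toReal_rpow, ← ENNReal.toReal_mul]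
      exact ENNReal.toReal_mono (hVfin _) (case1_lc μ hK hc a b t ht0 ht1))
  have hae : interior K =ᵐ[ρ] K := interior_ae_eq_of_null_frontier (hc.addHaar_frontier ρ)
  have hKfin : ρ K ≠ ∞ := hK.measure_lt_top.ne
  have hKpos : ρ K ≠ 0 := ((isOpen_interior.measure_pos ρ ⟨0, h0⟩).trans_le
    (measure_mono interior_subset)).ne'
  have hres : ρ.restrict (interior K) = ρ.restrict K := Measure.restrict_congr_set hae
  have hfinm : IsFiniteMeasure (ρ.restrict K) := ⟨by simpa using hKfin.lt_top⟩
  have hint : Integrable (fun p : E × F => p) (ρ.restrict K) :=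
    (continuous_id.continuousOn).integrableOn_compact hK
  have hg : Integrable (fun p : (E × F) × (E × F) => p.1 + p.2)
      ((ρ.restrict K).prod (ρ.restrict K)) := (hint.comp_fst _).add (hint.comp_snd _)
  have hg0 : ∫ p : (E × F) × (E × F), p.1 + p.2 ∂((ρ.restrict K).prod (ρ.restrict K)) = 0 := by
    rw [integral_add (hint.comp_fst _) (hint.comp_snd _),
      integral_fun_fst (fun p : E × F => p), integral_fun_snd (fun p : E × F => p), hb]
    simp
  have hJ := jensen_low ((ρ.restrict K).prod (ρ.restrict K)) hg l (c := ((V 0).toReal)⁻¹)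
    (w := fun p => (V (p.1 + p.2))⁻¹) (by
      rw [← hres]
      have : ∀ᵐ p ∂((ρ.restrict (interior K)).prod (ρ.restrict (interior K))),
          p ∈ interior K ×ˢ interior K := by
        rw [Measure.prod_restrict]
        exact ae_restrict_mem (isOpen_interior.measurableSet.prod isOpen_interior.measurableSet)
      filter_upwards [this] with p hp
      have hpU : p.1 + p.2 ∈ U := by
        have := hc.interior hp.1 hp.2 (a := 1 / 2) (b := 1 / 2) (by norm_num) (by norm_num)
          (by norm_num)
        simpa [hUdef] using this
      have := hl _ hpU
      calc _ ≤ ENNReal.ofReal ((V (p.1 + p.2)).toReal⁻¹) := ENNReal.ofReal_le_ofReal this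
        _ = _ := by
          rw [ENNReal.ofReal_inv_of_pos (ENNReal.toReal_pos (hVpos _ hpU).ne' (hVfin _)),
            ENNReal.ofReal_toReal (hVfin _)])
  rw [hg0, map_zero, add_zero] at hJ
  have hmV : Measurable V := case1_meas μ hK
  have hJ2 : (V 0)⁻¹ * (ρ K * ρ K) ≤ ∫⁻ a, (V a)⁻¹ * ρ (K ∩ {p | a - p ∈ K}) ∂ρ := by
    rw [← conv_weight ρ hK.measurableSet hK.measurableSet (w := fun a => (V a)⁻¹) hmV.inv]
    rw [lintegral_prod (fun p : (E × F) × (E × F) => (V (p.1 + p.2))⁻¹) ((hmV.comp (measurable_fst.add measurable_snd)).inv).aemeasurable] at hJ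
    refine le_trans (le_of_eq ?_) hJ
    rw [ENNReal.ofReal_mul (by positivity), ENNReal.ofReal_inv_of_pos
      (ENNReal.toReal_pos (hVpos _ hU0).ne' (hVfin _)), ENNReal.ofReal_toReal (hVfin _),
      ofReal_measureReal]
    rw [← univ_prod_univ, Measure.prod_prod]
    simp
  have hJ3 : ∫⁻ a, (V a)⁻¹ * ρ (K ∩ {p | a - p ∈ K}) ∂ρ ≤ ENNReal.ofReal (2 ^ Module.finrank ℝ E) *
      ∫⁻ y, ν (Prod.mk y ⁻¹' K) * ν (Prod.mk y ⁻¹' K) ∂μ := by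
    refine le_trans (lintegral_mono fun a => ?_) (case1_int μ ν hK)
    refine (mul_le_mul_right (case1_fib μ ν hK hc a) _).trans ?_
    rw [← mul_assoc]
    refine mul_le_of_le_one_left (by simp) ?_
    exact ENNReal.inv_mul_le_one _
  have hJ4 : (∫⁻ y, ν (Prod.mk y ⁻¹' K) * ν (Prod.mk y ⁻¹' K) ∂μ) * μ (Prod.fst '' K) ≤
      R * ρ K * ρ K := by
    have hm := measurable_measure_prodMk_left (ν := ν) hK.measurableSet
    rw [← lintegral_mul_const (f := fun y => ν (Prod.mk y ⁻¹' K) * ν (Prod.mk y ⁻¹' K)) _ (hm.mul hm)]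
    have e : ρ K = ∫⁻ y, ν (Prod.mk y ⁻¹' K) ∂μ := Measure.prod_apply hK.measurableSet
    conv_rhs => rw [mul_assoc, mul_comm, mul_assoc, mul_comm (ρ K) R]; arg 1; rw [e]
    rw [← lintegral_mul_const _ hm]
    refine lintegral_mono fun y => ?_
    simp only []
    rw [mul_assoc, mul_comm (ν _) (μ _)]
    exact mul_le_mul_right (rs1' μ ν hK hc y hE hF) _
  have hVne := (hVpos _ hU0).ne'
  have fin : (V 0)⁻¹ * (ρ K * ρ K) * μ (Prod.fst '' K) ≤
      ENNReal.ofReal (2 ^ Module.finrank ℝ E) * (R * ρ K * ρ K) := by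
    calc _ ≤ ENNReal.ofReal (2 ^ Module.finrank ℝ E) *
      (∫⁻ y, ν (Prod.mk y ⁻¹' K) * ν (Prod.mk y ⁻¹' K) ∂μ) * μ (Prod.fst '' K) := by
          exact mul_le_mul_left (hJ2.trans hJ3) _
      _ ≤ _ := by rw [mul_assoc]; gcongr
  have hKK : ρ K * ρ K ≠ 0 := mul_ne_zero hKpos hKpos
  have hKK' : ρ K * ρ K ≠ ∞ := ENNReal.mul_ne_top hKfin hKfin
  have fin2 : (V 0)⁻¹ * μ (Prod.fst '' K) ≤ ENNReal.ofReal (2 ^ Module.finrank ℝ E) * R := by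
    refine (ENNReal.mul_le_mul_iff_right hKK hKK').1 (le_trans (le_of_eq ?_)
      (fin.trans (le_of_eq ?_))) <;> ring
  calc μ (Prod.fst '' K) = V 0 * ((V 0)⁻¹ * μ (Prod.fst '' K)) := by
        rw [← mul_assoc, ENNReal.mul_inv_cancel hVne (hVfin 0), one_mul]
    _ ≤ V 0 * (ENNReal.ofReal (2 ^ Module.finrank ℝ E) * R) := by gcongr
    _ = _ := by ring

lemma out_le {K : Set (E × F)} (hK : IsCompact K) (hc : Convex ℝ K) (h0 : (0 : E × F) ∈ K) :
    μ (Prod.fst '' (convexHull ℝ (K ∪ -K))) ≤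
      ENNReal.ofReal (4 ^ Module.finrank ℝ E) * μ (Prod.fst '' K) := by
  have hcf : Convex ℝ (Prod.fst '' K) := hc.linear_image (LinearMap.fst ℝ E F)
  refine le_trans (measure_mono ?_) (rs2 μ (hK.image continuous_fst) hcf)
  have : (convexHull ℝ (K ∪ -K)) ⊆ K - K := by
    refine convexHull_min ?_ (hc.sub hc)
    rintro x (hx | hx)
    · exact ⟨x, hx, 0, h0, by simp⟩
    · exact ⟨0, h0, -x, hx, by simp⟩
  rintro _ ⟨x, hx, rfl⟩
  obtain ⟨a, ha, b, hb, rfl⟩ := this hx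
  exact ⟨_, ⟨a, ha, rfl⟩, _, ⟨b, hb, rfl⟩, by simp⟩
end part4

section part5
open MeasureTheory Metric Set
open scoped ENNReal RealInnerProductSpace Pointwise

variable {E : Type*} [NormedAddCommGroup E] [NormedSpace ℝ E] [MeasurableSpace E]
    [BorelSpace E] [FiniteDimensional ℝ E] (μ : Measure E) [μ.IsAddHaarMeasure]
  {F : Type*} [NormedAddCommGroup F] [NormedSpace ℝ F] [MeasurableSpace F]
    [BorelSpace F] [FiniteDimensional ℝ F] (ν : Measure F) [ν.IsAddHaarMeasure]

lemma refl_meas {A : Set E} (hA : IsCompact A) :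
    Measurable (fun h : E => μ (A ∩ {x | h - x ∈ A})) := by
  have hm : MeasurableSet {p : E × E | p.2 ∈ A ∧ p.1 - p.2 ∈ A} :=
    (hA.measurableSet.preimage measurable_snd).inter
      (hA.measurableSet.preimage (measurable_fst.sub measurable_snd))
  exact measurable_measure_prodMk_left hm

lemma section_convex {L : Set (F × E)} (hc : Convex ℝ L) (q : F) :
    Convex ℝ (Prod.mk q ⁻¹' L) := by
  intro x hx y hy a b ha hb hab
  have := hc hx hy ha hb hab
  simp only [mem_preimage] at this ⊢
  convert this using 1
  ext
  · simp [← add_smul, hab]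
  · simp

lemma case2_sec {L : Set (F × E)} (hL : IsCompact L) (hc : Convex ℝ L) 
    (q : F) {u : E → ℝ} (hu : Continuous u)
    (hul : ∀ x y : E, u ((1 / 2 : ℝ) • (x + y)) = (1 / 2) * u x + (1 / 2) * u y)
    (huV : ∀ h, (q, h) ∈ interior L → ENNReal.ofReal (u h) ≤
      (μ ((Prod.mk q ⁻¹' L) ∩ {x | (2 : ℝ) • h - x ∈ Prod.mk q ⁻¹' L}))⁻¹)
    (hne : (Prod.mk q ⁻¹' interior L).Nonempty) :
    ∫ x in Prod.mk q ⁻¹' interior L, u x ∂μ ≤ 2 ^ Module.finrank ℝ E := by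
  set A := Prod.mk q ⁻¹' interior L with hA
  have hAo : IsOpen A := isOpen_interior.preimage (by fun_prop)
  have hAc : Convex ℝ A := section_convex hc.interior q
  have hB : IsCompact (Prod.mk q ⁻¹' L) := section_compact hL q
  set B := Prod.mk q ⁻¹' L
  have hAB : A ⊆ B := fun x hx => interior_subset (s := L) hx
  have hAfin : μ A ≠ ∞ := ((measure_mono hAB).trans_lt hB.measure_lt_top).ne
  have hApos : μ A ≠ 0 := (hAo.measure_pos μ hne).ne'
  have hfinm : IsFiniteMeasure (μ.restrict A) := ⟨by simpa using hAfin.lt_top⟩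
  have hint : Integrable u (μ.restrict A) :=
    (hu.continuousOn.integrableOn_compact hB).mono_set hAB
  have hg : Integrable (fun p : E × E => (1 / 2) * u p.1 + (1 / 2) * u p.2)
      ((μ.restrict A).prod (μ.restrict A)) :=
    ((hint.comp_fst _).const_mul _).add ((hint.comp_snd _).const_mul _)
  set W : E → ℝ≥0∞ := fun h => μ (B ∩ {x | h - x ∈ B}) with hW
  have hWm : Measurable W := refl_meas μ hB
  have hJ := jensen_low ((μ.restrict A).prod (μ.restrict A)) hg (ContinuousLinearMap.id ℝ ℝ)
    (c := 0) (w := fun p => (W (p.1 + p.2))⁻¹) (by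
      have : ∀ᵐ p ∂((μ.restrict A).prod (μ.restrict A)), p ∈ A ×ˢ A := by
        rw [Measure.prod_restrict]
        exact ae_restrict_mem (hAo.measurableSet.prod hAo.measurableSet)
      filter_upwards [this] with p hp
      have h1 : (1 / 2 : ℝ) • (p.1 + p.2) ∈ A := by
        have := hAc hp.1 hp.2 (a := 1 / 2) (b := 1 / 2) (by norm_num) (by norm_num) (by norm_num)
        rwa [smul_add]
      have h2 := huV _ h1
      have e : (2 : ℝ) • ((1 / 2 : ℝ) • (p.1 + p.2)) = p.1 + p.2 := by module
      rw [e, hul] at h2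
      simpa using h2)
  have e1 : ∫ p : E × E, ((1 / 2) * u p.1 + (1 / 2) * u p.2) ∂((μ.restrict A).prod (μ.restrict A)) =
      μ.real A * ∫ x in A, u x ∂μ := by
    rw [integral_add ((hint.comp_fst _).const_mul _) ((hint.comp_snd _).const_mul _),
      integral_const_mul, integral_const_mul, integral_fun_fst, integral_fun_snd]
    simp
    ring
  rw [e1, lintegral_prod (fun p : E × E => (W (p.1 + p.2))⁻¹)
    ((hWm.comp (measurable_fst.add measurable_snd)).inv).aemeasurable,
    conv_weight μ hAo.measurableSet hAo.measurableSet (w := fun a => (W a)⁻¹) hWm.inv] at hJ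
  have hJ2 : ∫⁻ h, (W h)⁻¹ * μ (A ∩ {x | h - x ∈ A}) ∂μ ≤
      ENNReal.ofReal (2 ^ Module.finrank ℝ E) * μ A := by
    rw [← meas_homothety μ A 0 (by norm_num), ← lintegral_indicator_one]
    · refine lintegral_mono fun h => ?_
      by_cases hh : h ∈ (fun x => (0 : E) + (2 : ℝ) • x) '' A
      · rw [indicator_of_mem hh]
        refine le_trans (mul_le_mul_right (measure_mono ?_) _) (ENNReal.inv_mul_le_one (W h))
        exact inter_subset_inter hAB (fun p hp => hAB hp)
      · have : A ∩ {x | h - x ∈ A} = ∅ := by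
          ext x
          simp only [mem_inter_iff, mem_ofPred_eq, mem_empty_iff_false, iff_false, not_and]
          intro h1 h2
          apply hh
          have := hAc h1 h2 (a := 1 / 2) (b := 1 / 2) (by norm_num) (by norm_num) (by norm_num)
          exact ⟨_, this, by module⟩
        simp [this]
    · have : (fun x => (0 : E) + (2 : ℝ) • x) '' A = (2 : ℝ) • A := by
        ext; simp [mem_smul_set]
      rw [this]
      exact (hAo.smul₀ (by norm_num)).measurableSet
  have hJ3 := hJ.trans hJ2
  simp only [ContinuousLinearMap.id_apply, zero_mul, zero_add] at hJ3
  have hpos : 0 < μ.real A := ENNReal.toReal_pos hApos hAfin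
  rw [← ofReal_measureReal hAfin, ← ENNReal.ofReal_mul (by positivity),
    ENNReal.ofReal_le_ofReal_iff (by positivity)] at hJ3
  nlinarith

lemma case2_low {L : Set (F × E)} (hL : IsCompact L) (hc : Convex ℝ L)
    (h0 : (0 : F × E) ∈ interior L) (hb : ∫ p in L, p ∂(ν.prod μ) = 0) :
    (ν.prod μ) L ≤ ENNReal.ofReal (2 ^ Module.finrank ℝ E) * ν (Prod.fst '' L) *
      μ (Prod.mk 0 ⁻¹' (L ∩ -L)) := by
  set V : F × E → ℝ≥0∞ := fun a => μ ((Prod.mk a.1 ⁻¹' L) ∩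
    {x | (2 : ℝ) • a.2 - x ∈ Prod.mk a.1 ⁻¹' L}) with hV
  have hV0 : V 0 = μ (Prod.mk 0 ⁻¹' (L ∩ -L)) := by
    simp only [hV]
    congr 1
    ext x
    simp
  rw [← hV0]
  set ρ := ν.prod μ
  have hVc : ∀ a : F × E, IsCompact ((Prod.mk a.1 ⁻¹' L) ∩
    {x | (2 : ℝ) • a.2 - x ∈ Prod.mk a.1 ⁻¹' L}) := fun a => refl_compact (section_compact hL _) _
  have hVfin : ∀ a, V a ≠ ∞ := fun a => (hVc a).measure_lt_top.ne
  have hVpos : ∀ a ∈ interior L, 0 < V a := by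
    intro a ha
    have ho : IsOpen ((Prod.mk a.1 ⁻¹' interior L) ∩
        {x | (2 : ℝ) • a.2 - x ∈ Prod.mk a.1 ⁻¹' interior L}) := by
      have h1 : IsOpen (Prod.mk a.1 ⁻¹' interior L) := isOpen_interior.preimage (by fun_prop)
      exact h1.inter (h1.preimage (f := fun x => (2 : ℝ) • a.2 - x) (by fun_prop))
    have hne : ((Prod.mk a.1 ⁻¹' interior L) ∩
        {x | (2 : ℝ) • a.2 - x ∈ Prod.mk a.1 ⁻¹' interior L}).Nonempty := by
      refine ⟨a.2, ha, ?_⟩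
      have e : (2 : ℝ) • a.2 - a.2 = a.2 := by module
      simp only [mem_ofPred_eq, e]
      exact ha
    refine (ho.measure_pos μ hne).trans_le (measure_mono ?_)
    exact fun x hx => ⟨interior_subset (s := L) hx.1, interior_subset (s := L) hx.2⟩
  obtain ⟨l, hl⟩ := subgrad_inv isOpen_interior hc.interior h0 (v := fun a => (V a).toReal)
    (fun a ha => ENNReal.toReal_pos (hVpos a ha).ne' (hVfin a)) (by
      intro a _ b _ t ht0 ht1
      rw [ENNReal.toReal_rpow, ENNReal.toReal_rpow, ← ENNReal.toReal_mul]
      refine ENNReal.toReal_mono (hVfin _) ((BM μ _ _ (hVc a) (hVc b) t ht0 ht1).trans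
        (measure_mono ?_))
      rintro _ ⟨_, ⟨x, hx, rfl⟩, _, ⟨y, hy, rfl⟩, rfl⟩
      have h1 := hc hx.1 hy.1 (a := 1 - t) (b := t) (by linarith) ht0.le (by ring)
      have h2 := hc hx.2 hy.2 (a := 1 - t) (b := t) (by linarith) ht0.le (by ring)
      refine ⟨?_, ?_⟩
      · simp only [mem_preimage]
        convert h1 using 1
        ext <;> simp
      · simp only [mem_preimage, mem_ofPred_eq]
        convert h2 using 1
        ext
        · simp
        · simp; module)
  set c := ((V 0).toReal)⁻¹ with hcdef
  have hae : interior L =ᵐ[ρ] L := interior_ae_eq_of_null_frontier (hc.addHaar_frontier ρ)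
  have hLfin : ρ L ≠ ∞ := hL.measure_lt_top.ne
  have hres : ρ.restrict (interior L) = ρ.restrict L := Measure.restrict_congr_set hae
  have hfinm : IsFiniteMeasure (ρ.restrict L) := ⟨by simpa using hLfin.lt_top⟩
  have hint : Integrable (fun p : F × E => p) (ρ.restrict L) :=
    (continuous_id.continuousOn).integrableOn_compact hL
  have hintG : Integrable (fun p => c + l p) (ρ.restrict (interior L)) := by
    rw [hres]
    exact (integrable_const c).add (l.integrable_comp hint)
  have hGint : ∫ p in interior L, (c + l p) ∂ρ = c * ρ.real L := by
    rw [hres, integral_add (integrable_const c) (l.integrable_comp hint), integral_const,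
      l.integral_comp_comm hint, hb]
    simp [mul_comm]
  have hGi : Integrable ((interior L).indicator (fun p => c + l p)) ρ :=
    (integrable_indicator_iff isOpen_interior.measurableSet).2 hintG
  rw [← integral_indicator isOpen_interior.measurableSet, integral_prod _ hGi] at hGint
  set Q := Prod.fst '' interior L with hQ
  have hQo : IsOpen Q := isOpenMap_fst _ isOpen_interior
  have hQsub : Q ⊆ Prod.fst '' L := image_mono interior_subset
  have hQLfin : ν (Prod.fst '' L) ≠ ∞ := (hL.image continuous_fst).measure_lt_top.ne
  have hQfin : ν Q ≠ ∞ := ((measure_mono hQsub).trans_lt hQLfin.lt_top).ne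
  have hsec : ∀ q, ∫ x, (interior L).indicator (fun p => c + l p) (q, x) ∂μ ≤
      Q.indicator (fun _ => (2 : ℝ) ^ Module.finrank ℝ E) q := by
    intro q
    have e : ∀ x, (interior L).indicator (fun p => c + l p) (q, x) =
        (Prod.mk q ⁻¹' interior L).indicator (fun x => c + l (q, x)) x := fun x => rfl
    have hms : MeasurableSet (Prod.mk q ⁻¹' interior L) :=
      (isOpen_interior.preimage (by fun_prop)).measurableSet
    simp_rw [e]
    rw [integral_indicator hms]
    by_cases hq : q ∈ Q
    · rw [indicator_of_mem hq]
      refine case2_sec μ hL hc q (by fun_prop) ?_ ?_ ?_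
      · intro x y
        have : (q, (1 / 2 : ℝ) • (x + y)) = (1 / 2 : ℝ) • (q, x) + (1 / 2 : ℝ) • (q, y) := by
          ext
          · simp; module
          · simp
        rw [this, map_add, map_smul, map_smul]
        simp only [smul_eq_mul]
        ring
      · intro h hh
        have h1 := hl _ hh
        calc _ ≤ ENNReal.ofReal ((V (q, h)).toReal⁻¹) := ENNReal.ofReal_le_ofReal h1
          _ = _ := by
            rw [ENNReal.ofReal_inv_of_pos (ENNReal.toReal_pos (hVpos _ hh).ne' (hVfin _)),
              ENNReal.ofReal_toReal (hVfin _)]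
      · obtain ⟨p, hp, rfl⟩ := hq
        exact ⟨p.2, hp⟩
    · have : Prod.mk q ⁻¹' interior L = ∅ := by
        ext x
        simp only [mem_preimage, mem_empty_iff_false, iff_false]
        exact fun h => hq ⟨_, h, rfl⟩
      rw [this, indicator_of_notMem hq]
      simp
  have hfinal : c * ρ.real L ≤ 2 ^ Module.finrank ℝ E * ν.real Q := by
    rw [← hGint]
    refine (integral_mono hGi.integral_prod_left ?_ hsec).trans ?_
    · exact (integrable_indicator_iff hQo.measurableSet).2 (integrableOn_const hQfin)
    · rw [integral_indicator hQo.measurableSet, setIntegral_const, smul_eq_mul, mul_comm]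
  have hvpos : 0 < (V 0).toReal := ENNReal.toReal_pos (hVpos _ h0).ne' (hVfin _)
  have hfin2 : ρ.real L ≤ 2 ^ Module.finrank ℝ E * ν.real (Prod.fst '' L) * (V 0).toReal := by
    have h1 : ν.real Q ≤ ν.real (Prod.fst '' L) := measureReal_mono hQsub hQLfin
    rw [hcdef, inv_mul_le_iff₀ hvpos] at hfinal
    refine hfinal.trans ?_
    rw [mul_comm]
    gcongr
  rw [← ofReal_measureReal hLfin, ← ofReal_measureReal hQLfin, ← ENNReal.ofReal_toReal (hVfin 0),
    ← ENNReal.ofReal_mul (by positivity), ← ENNReal.ofReal_mul (by positivity)]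
  exact ENNReal.ofReal_le_ofReal hfin2

lemma case2_main {L : Set (F × E)} (hL : IsCompact L) (hc : Convex ℝ L)
    (h0 : (0 : F × E) ∈ interior L) (hb : ∫ p in L, p ∂(ν.prod μ) = 0)
    (hE : 1 ≤ Module.finrank ℝ E) (hF : 1 ≤ Module.finrank ℝ F) :
    μ (Prod.mk 0 ⁻¹' (L - L)) ≤
      ENNReal.ofReal ((Real.exp 1 * ((Module.finrank ℝ E + Module.finrank ℝ F : ℕ) : ℝ) /
        Module.finrank ℝ E) ^ Module.finrank ℝ E) * ENNReal.ofReal (8 ^ Module.finrank ℝ E) *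
        μ (Prod.mk 0 ⁻¹' (L ∩ -L)) := by
  set R := ENNReal.ofReal ((Real.exp 1 * ((Module.finrank ℝ E + Module.finrank ℝ F : ℕ) : ℝ) /
        Module.finrank ℝ E) ^ Module.finrank ℝ E) with hR
  set S : Set ((F × E) × (F × E)) := (L ×ˢ L) ∩ {p | p.1.1 = p.2.1} with hS
  have hSc : IsCompact S := (hL.prod hL).inter_right (isClosed_eq (by fun_prop) (by fun_prop))
  set T : (F × E) × (F × E) →ₗ[ℝ] E × F :=
    { toFun := fun p => (p.1.2 - p.2.2, p.1.1)
      map_add' := by intro a b; ext <;> simp; abel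
      map_smul' := by intro r a; ext <;> simp [smul_sub] } with hT
  have hSconv : Convex ℝ S := by
    refine (hc.prod hc).inter ?_
    intro x hx y hy a b _ _ _
    simp only [mem_ofPred_eq] at hx hy ⊢
    simp [hx, hy]
  set N := T '' S with hN
  have hNc : IsCompact N := hSc.image T.continuous_of_finiteDimensional
  have hNconv : Convex ℝ N := hSconv.linear_image T
  have h1 := rs1' μ ν hNc hNconv 0 hE hF
  have e1 : Prod.mk 0 ⁻¹' (L - L) ⊆ Prod.fst '' N := by
    rintro h ⟨p, hp, p', hp', hh⟩
    have h1 : p.1 - p'.1 = 0 := congrArg Prod.fst hh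
    have h2 : p.2 - p'.2 = h := congrArg Prod.snd hh
    exact ⟨T (p, p'), ⟨(p, p'), ⟨⟨hp, hp'⟩, sub_eq_zero.1 h1⟩, rfl⟩, h2⟩
  have e2 : Prod.fst '' L ⊆ Prod.mk 0 ⁻¹' N := by
    rintro _ ⟨p, hp, rfl⟩
    refine ⟨(p, p), ⟨⟨hp, hp⟩, rfl⟩, ?_⟩
    simp [hT]
  have e3 : (μ.prod ν) N ≤ ENNReal.ofReal (4 ^ Module.finrank ℝ E) * (ν.prod μ) L := by
    rw [Measure.prod_apply_symm hNc.measurableSet, Measure.prod_apply hL.measurableSet,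
      ← lintegral_const_mul _ (measurable_measure_prodMk_left hL.measurableSet)]
    refine lintegral_mono fun q => le_trans (measure_mono ?_)
      (rs2 μ (section_compact hL q) (section_convex hc q))
    rintro x ⟨⟨p, p'⟩, ⟨⟨hp, hp'⟩, hpp⟩, hx⟩
    have hx1 : p.2 - p'.2 = x := congrArg Prod.fst hx
    have hx2 : p.1 = q := congrArg Prod.snd hx
    have hpp' : p.1 = p'.1 := hpp
    refine ⟨p.2, ?_, p'.2, ?_, hx1⟩
    · simp only [mem_preimage, ← hx2]; exact hp
    · simp only [mem_preimage, ← hx2, hpp']; exact hp'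
  have h2 := case2_low μ ν hL hc h0 hb
  have hQfin : ν (Prod.fst '' L) ≠ ∞ := (hL.image continuous_fst).measure_lt_top.ne
  have hQpos : ν (Prod.fst '' L) ≠ 0 := by
    have ho : IsOpen (Prod.fst '' interior L) := isOpenMap_fst _ isOpen_interior
    exact ((ho.measure_pos ν ⟨_, _, h0, rfl⟩).trans_le
      (measure_mono (image_mono interior_subset))).ne'
  refine (ENNReal.mul_le_mul_iff_right hQpos hQfin).1 ?_
  calc ν (Prod.fst '' L) * μ (Prod.mk 0 ⁻¹' (L - L))
      ≤ μ (Prod.fst '' N) * ν (Prod.mk 0 ⁻¹' N) := by rw [mul_comm]; gcongr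
    _ ≤ R * (μ.prod ν) N := h1
    _ ≤ R * (ENNReal.ofReal (4 ^ Module.finrank ℝ E) * (ENNReal.ofReal (2 ^ Module.finrank ℝ E) *
        ν (Prod.fst '' L) * μ (Prod.mk 0 ⁻¹' (L ∩ -L)))) := by
        gcongr; exact e3.trans (by gcongr)
    _ = _ := by
        have : ENNReal.ofReal (8 ^ Module.finrank ℝ E) = ENNReal.ofReal (4 ^ Module.finrank ℝ E) *
            ENNReal.ofReal (2 ^ Module.finrank ℝ E) := by
          rw [← ENNReal.ofReal_mul (by positivity), ← mul_pow]; norm_num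
        rw [this]; ring
end part5

section part6
open MeasureTheory Metric Set
open scoped ENNReal RealInnerProductSpace Pointwise

section polar
variable {X : Type*} [NormedAddCommGroup X] [InnerProductSpace ℝ X] [FiniteDimensional ℝ X]

/-- polar set -/
def pol (A : Set X) : Set X := {x | ∀ y ∈ A, ⟪x, y⟫ ≤ 1}

lemma pol_anti {A B : Set X} (h : A ⊆ B) : pol B ⊆ pol A := fun _ hx y hy => hx y (h hy)

lemma pol_closed (A : Set X) : IsClosed (pol A) := by
  have : pol A = ⋂ y ∈ A, {x : X | ⟪x, y⟫ ≤ 1} := by ext; simp [pol]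
  rw [this]
  exact isClosed_biInter fun y _ => isClosed_le (by fun_prop) continuous_const

lemma pol_convex (A : Set X) : Convex ℝ (pol A) := by
  intro x hx y hy a b ha hb hab z hz
  rw [inner_add_left, real_inner_smul_left, real_inner_smul_left]
  have := hx z hz
  have := hy z hz
  nlinarith

lemma pol_zero (A : Set X) : (0 : X) ∈ pol A := fun y _ => by simp

lemma pol_sub_ball {A : Set X} {r : ℝ} (hr : 0 < r) (h : closedBall 0 r⁻¹ ⊆ A) :
    pol A ⊆ closedBall 0 r := by
  intro x hx
  rw [mem_closedBall_zero_iff]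
  rcases eq_or_ne x 0 with rfl | hx0
  · simpa using hr.le
  have hn : 0 < ‖x‖ := norm_pos_iff.2 hx0
  have := hx ((r⁻¹ * ‖x‖⁻¹) • x) (h (by
    rw [mem_closedBall_zero_iff, norm_smul, Real.norm_of_nonneg (by positivity), mul_assoc,
      inv_mul_cancel₀ hn.ne', mul_one]))
  rw [real_inner_smul_right, real_inner_self_eq_norm_sq] at this
  field_simp at this
  exact this

lemma ball_sub_pol {A : Set X} {r : ℝ} (hr : 0 < r) (h : A ⊆ closedBall 0 r) :
    closedBall 0 r⁻¹ ⊆ pol A := by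
  intro x hx y hy
  have h1 := h hy
  rw [mem_closedBall_zero_iff] at hx h1
  calc ⟪x, y⟫ ≤ ‖x‖ * ‖y‖ := real_inner_le_norm x y
    _ ≤ r⁻¹ * r := by gcongr
    _ = 1 := inv_mul_cancel₀ hr.ne'

lemma pol_lemma {A B : Set X} (hA : IsCompact A) (hB : IsCompact B) (hAc : Convex ℝ A)
    (hBc : Convex ℝ B) (hA0 : (0 : X) ∈ A) (hB0 : (0 : X) ∈ B) :
    pol (pol A ∩ pol B) ⊆ A + B := by
  intro y hy
  by_contra hn
  obtain ⟨f, u, hf, hu⟩ := geometric_hahn_banach_closed_point (hAc.add hBc)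
    (hA.add hB).isClosed hn
  obtain ⟨x, rfl⟩ := (InnerProductSpace.toDual ℝ X).surjective f
  simp only [InnerProductSpace.toDual_apply_apply] at hf hu
  have hu0 : 0 < u := by
    have := hf 0 ⟨0, hA0, 0, hB0, by simp⟩
    simpa using this
  have hmem : u⁻¹ • x ∈ pol A ∩ pol B := by
    constructor
    · intro a ha
      have := hf a ⟨a, ha, 0, hB0, by simp⟩
      rw [real_inner_smul_left, inv_mul_le_iff₀ hu0]
      linarith
    · intro a ha
      have := hf a ⟨0, hA0, a, ha, by simp⟩
      rw [real_inner_smul_left, inv_mul_le_iff₀ hu0]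
      linarith
  have := hy _ hmem
  rw [real_inner_smul_right, inv_mul_le_iff₀ hu0, real_inner_comm] at this
  linarith

lemma bipol {A : Set X} (hA : IsCompact A) (hAc : Convex ℝ A) (hA0 : (0 : X) ∈ A) :
    pol (pol A) ⊆ A := by
  have := pol_lemma hA (isCompact_singleton (x := (0 : X))) hAc (convex_singleton 0) hA0 rfl
  have e : pol ({0} : Set X) = univ := by ext; simp [pol]
  rw [e, inter_univ] at this
  intro x hx
  obtain ⟨a, ha, b, hb, rfl⟩ := this hx
  have : b = 0 := hb
  simpa [this] using ha

lemma pol_smul (A : Set X) {s : ℝ} (hs : 0 < s) : pol (s • A) = s⁻¹ • pol A := by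
  ext x
  rw [mem_smul_set_iff_inv_smul_mem₀ (inv_ne_zero hs.ne'), inv_inv]
  constructor
  · intro h y hy
    have := h (s • y) (smul_mem_smul_set hy)
    rwa [real_inner_smul_left, ← real_inner_smul_right]
  · rintro h _ ⟨y, hy, rfl⟩
    have := h y hy
    rw [real_inner_smul_left] at this
    simpa [real_inner_smul_right] using this

lemma pol_neg {A : Set X} (h : ∀ x ∈ A, -x ∈ A) : ∀ x ∈ pol A, -x ∈ pol A := by
  intro x hx y hy
  have := hx _ (h y hy)
  simpa using this

/-- sandwiched symmetric body -/
structure SB (A : Set X) (r : ℝ) : Prop where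
  compact : IsCompact A
  convex : Convex ℝ A
  symm : ∀ x ∈ A, -x ∈ A
  low : closedBall 0 r⁻¹ ⊆ A
  up : A ⊆ closedBall 0 r

lemma SB.zero {A : Set X} {r : ℝ} (h : SB A r) (hr : 0 < r) : (0 : X) ∈ A :=
  h.low (by simpa using hr.le)

lemma SB.pol {A : Set X} {r : ℝ} (h : SB A r) (hr : 0 < r) : SB (pol A) r where
  compact := (isCompact_closedBall (0 : X) r).of_isClosed_subset (pol_closed A) (pol_sub_ball hr h.low)
  convex := pol_convex A
  symm := pol_neg h.symm
  low := ball_sub_pol hr h.up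
  up := pol_sub_ball hr h.low

variable [MeasurableSpace X] [BorelSpace X] (μ : Measure X) [μ.IsAddHaarMeasure]

/-- volume product -/
def VP (A : Set X) : ℝ≥0∞ := μ A * μ (pol A)

lemma kup_up {A : Set X} {r : ℝ} (h : SB A r) (hr : 0 < r) :
    VP μ A ≤ ENNReal.ofReal (2 ^ Module.finrank ℝ X) * VP μ (A ∩ pol A) := by
  have hp := h.pol hr
  unfold VP
  rw [← conv_one μ h.compact.measurableSet hp.compact.measurableSet]
  have hcS : IsCompact (A + pol A) := h.compact.add hp.compact
  have hsub : A + pol A ⊆ (2 : ℝ) • pol (A ∩ pol A) := by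
    rintro _ ⟨a, ha, b, hb, rfl⟩
    rw [mem_smul_set_iff_inv_smul_mem₀ (by norm_num)]
    intro y hy
    have h1 := hy.2 a ha
    have h2 := hb y hy.1
    rw [real_inner_smul_left, inner_add_left, real_inner_comm y a]
    linarith
  calc _ ≤ ∫⁻ x, (A + pol A).indicator (fun _ => μ (A ∩ pol A)) x ∂μ := by
        refine lintegral_mono fun z => ?_
        by_cases hz : z ∈ A + pol A
        · rw [indicator_of_mem hz]
          have hc : IsCompact (A ∩ {x | z - x ∈ pol A}) :=
            h.compact.inter_right ((pol_closed A).preimage (continuous_const.sub continuous_id))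
          refine half_bm μ (B := -(A ∩ {x | z - x ∈ pol A})) hc hc.neg ?_ (Measure.measure_neg μ _).symm
          intro a ha b hb
          refine ⟨h.convex ha.1 (by simpa using h.symm _ hb.1) (by norm_num) (by norm_num)
            (by norm_num), ?_⟩
          have := hp.convex (hp.symm _ ha.2) hb.2 (a := 1 / 2) (b := 1 / 2) (by norm_num)
            (by norm_num) (by norm_num)
          convert this using 1
          module
        · have : A ∩ {x | z - x ∈ pol A} = ∅ := by
            ext x
            simp only [mem_inter_iff, mem_ofPred_eq, mem_empty_iff_false, iff_false, not_and]
            exact fun h1 h2 => hz ⟨x, h1, _, h2, by simp⟩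
          simp [this]
    _ = μ (A ∩ pol A) * μ (A + pol A) := by
        rw [lintegral_indicator hcS.measurableSet, setLIntegral_const]
    _ ≤ μ (A ∩ pol A) * μ ((2 : ℝ) • pol (A ∩ pol A)) := by gcongr
    _ = _ := by
        rw [Measure.addHaar_smul, abs_of_nonneg (by positivity)]; ring

lemma kup_low {A : Set X} {r : ℝ} (h : SB A r) (hr : 0 < r) :
    VP μ (A ∩ pol A) ≤ ENNReal.ofReal (4 ^ Module.finrank ℝ X) * VP μ A := by
  have hp := h.pol hr
  unfold VP
  rw [← conv_one μ h.compact.measurableSet hp.compact.measurableSet]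
  have hcS : IsCompact (A + pol A) := h.compact.add hp.compact
  have hsub : pol (A ∩ pol A) ⊆ A + pol A := by
    have h1 := pol_lemma h.compact hp.compact h.convex hp.convex (h.zero hr) (hp.zero hr)
    refine subset_trans (pol_anti ?_) h1
    rintro x ⟨hx1, hx2⟩
    exact ⟨bipol h.compact h.convex (h.zero hr) hx2, hx1⟩
  set S := (fun x => (0 : X) + (1 / 2 : ℝ) • x) '' (A + pol A) with hS
  have hSc : IsCompact S := hcS.image (by fun_prop)
  have key : ENNReal.ofReal ((1 / 2) ^ Module.finrank ℝ X) * μ (A ∩ pol A) *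
      (ENNReal.ofReal ((1 / 2) ^ Module.finrank ℝ X) * μ (A + pol A)) ≤
      ∫⁻ z, μ (A ∩ {x | z - x ∈ pol A}) ∂μ := by
    rw [← meas_homothety μ (A + pol A) 0 (by norm_num)]
    calc _ = ∫⁻ z in S, ENNReal.ofReal ((1 / 2) ^ Module.finrank ℝ X) * μ (A ∩ pol A) ∂μ := by
          rw [setLIntegral_const]
      _ ≤ ∫⁻ z in S, μ (A ∩ {x | z - x ∈ pol A}) ∂μ := by
          refine setLIntegral_mono' hSc.measurableSet ?_
          rintro _ ⟨_, ⟨a, ha, b, hb, rfl⟩, rfl⟩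
          rw [← meas_homothety μ _ ((1 / 2 : ℝ) • a) (by norm_num)]
          apply measure_mono
          rintro _ ⟨x, hx, rfl⟩
          refine ⟨h.convex ha hx.1 (by norm_num) (by norm_num) (by norm_num), ?_⟩
          have := hp.convex hb (hp.symm _ hx.2) (a := 1 / 2) (b := 1 / 2) (by norm_num)
            (by norm_num) (by norm_num)
          simp only [mem_ofPred_eq]
          convert this using 1
          module
      _ ≤ _ := setLIntegral_le_lintegral _ _
  calc μ (A ∩ pol A) * μ (pol (A ∩ pol A)) ≤ μ (A ∩ pol A) * μ (A + pol A) := by gcongr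
    _ = ENNReal.ofReal (4 ^ Module.finrank ℝ X) *
        (ENNReal.ofReal ((1 / 2) ^ Module.finrank ℝ X) * μ (A ∩ pol A) *
      (ENNReal.ofReal ((1 / 2) ^ Module.finrank ℝ X) * μ (A + pol A))) := by
        have : ENNReal.ofReal (4 ^ Module.finrank ℝ X) *
            (ENNReal.ofReal ((1 / 2) ^ Module.finrank ℝ X) *
            ENNReal.ofReal ((1 / 2) ^ Module.finrank ℝ X)) = 1 := by
          rw [← ENNReal.ofReal_mul (by positivity), ← ENNReal.ofReal_mul (by positivity),
            ← mul_pow, ← mul_pow]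
          norm_num
        calc _ = 1 * (μ (A ∩ pol A) * μ (A + pol A)) := by rw [one_mul]
          _ = _ := by rw [← this]; ring
    _ ≤ _ := by gcongr

lemma VP_smul (A : Set X) {s : ℝ} (hs : 0 < s) : VP μ (s • A) = VP μ A := by
  unfold VP
  rw [pol_smul A hs, Measure.addHaar_smul, Measure.addHaar_smul, mul_mul_mul_comm,
    ← ENNReal.ofReal_mul (by positivity), ← abs_mul, ← mul_pow, mul_inv_cancel₀ hs.ne']
  simp

lemma SB.step {A : Set X} {r : ℝ} (h : SB A r) (hr : 1 ≤ r) :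
    SB (√r • (A ∩ _root_.pol A)) (√r) := by
  have hr0 : 0 < r := by linarith
  have hp := h.pol hr0
  have hs : 0 < √r := Real.sqrt_pos.2 hr0
  refine ⟨(h.compact.inter hp.compact).smul _, (h.convex.inter hp.convex).smul _, ?_, ?_, ?_⟩
  · rintro _ ⟨x, hx, rfl⟩
    exact ⟨-x, ⟨h.symm _ hx.1, hp.symm _ hx.2⟩, by simp⟩
  · intro x hx
    rw [mem_smul_set_iff_inv_smul_mem₀ hs.ne']
    have : (√r)⁻¹ • x ∈ closedBall (0 : X) r⁻¹ := by
      rw [mem_closedBall_zero_iff] at hx ⊢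
      rw [norm_smul, Real.norm_of_nonneg (by positivity)]
      calc _ ≤ (√r)⁻¹ * (√r)⁻¹ := by gcongr
        _ = r⁻¹ := by rw [← mul_inv, Real.mul_self_sqrt hr0.le]
    exact ⟨h.low this, hp.low this⟩
  · rintro _ ⟨x, hx, rfl⟩
    have := hx.2 x hx.1
    rw [real_inner_self_eq_norm_sq] at this
    have h1 : ‖x‖ ≤ 1 := by nlinarith [norm_nonneg x]
    simp only [mem_closedBall_zero_iff]
    rw [norm_smul, Real.norm_of_nonneg hs.le]
    nlinarith

lemma kup_iter (j : ℕ) : ∀ (A : Set X) (r : ℝ), SB A r → 1 ≤ r → r ≤ 2 ^ (2 ^ j) →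
    VP μ A ≤ ENNReal.ofReal ((4 * 2 ^ j) ^ Module.finrank ℝ X) *
      (μ (closedBall 0 1) * μ (closedBall 0 1)) ∧
    μ (closedBall 0 1) * μ (closedBall 0 1) ≤
      ENNReal.ofReal ((4 * 4 ^ j) ^ Module.finrank ℝ X) * VP μ A := by
  induction j with
  | zero =>
    intro A r h hr1 hr
    have hr0 : 0 < r := by linarith
    have hr2 : r ≤ 2 := by simpa using hr
    have e : ∀ s : ℝ, 0 < s → μ (closedBall 0 s) = ENNReal.ofReal (s ^ Module.finrank ℝ X) * μ (closedBall 0 1) :=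
      fun s hs => Measure.addHaar_closedBall' μ 0 hs.le
    have up : ∀ B : Set X, SB B r → μ B ≤ ENNReal.ofReal (2 ^ Module.finrank ℝ X) * μ (closedBall 0 1) := by
      intro B hB
      rw [← e 2 (by norm_num)]
      exact measure_mono (hB.up.trans (closedBall_subset_closedBall hr2))
    have low : ∀ B : Set X, SB B r → μ (closedBall 0 1) ≤ ENNReal.ofReal (2 ^ Module.finrank ℝ X) * μ B := by
      intro B hB
      calc μ (closedBall (0 : X) 1) = ENNReal.ofReal (2 ^ Module.finrank ℝ X) * μ (closedBall 0 (1 / 2)) := by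
            rw [e (1 / 2) (by norm_num), ← mul_assoc, ← ENNReal.ofReal_mul (by positivity), ← mul_pow]
            norm_num
        _ ≤ _ := by
            gcongr
            refine (closedBall_subset_closedBall ?_).trans hB.low
            rw [one_div]
            exact inv_anti₀ hr0 hr2
    have e4 : ENNReal.ofReal ((4 : ℝ) ^ Module.finrank ℝ X) = ENNReal.ofReal (2 ^ Module.finrank ℝ X) *
        ENNReal.ofReal (2 ^ Module.finrank ℝ X) := by
      rw [← ENNReal.ofReal_mul (by positivity), ← mul_pow]; norm_num
    simp only [pow_zero, mul_one, e4]
    constructor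
    · rw [mul_mul_mul_comm]
      exact mul_le_mul' (up A h) (up _ (h.pol hr0))
    · unfold VP
      rw [mul_mul_mul_comm]
      exact mul_le_mul' (low A h) (low _ (h.pol hr0))
  | succ j ih =>
    intro A r h hr1 hr
    have hr0 : 0 < r := by linarith
    have hs : 0 < √r := Real.sqrt_pos.2 hr0
    obtain ⟨h1, h2⟩ := ih _ _ (h.step hr1) (by rwa [Real.one_le_sqrt]) (by
      rw [Real.sqrt_le_left (by positivity), ← pow_mul, ← pow_succ]; exact hr)
    rw [VP_smul μ _ hs] at h1 h2
    constructor
    · refine (kup_up μ h hr0).trans ?_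
      calc _ ≤ ENNReal.ofReal (2 ^ Module.finrank ℝ X) * _ := mul_le_mul_right h1 _
        _ = _ := by
          rw [← mul_assoc, ← ENNReal.ofReal_mul (by positivity), ← mul_pow]
          congr 3; ring
    · refine h2.trans ?_
      calc _ ≤ ENNReal.ofReal ((4 * 4 ^ j) ^ Module.finrank ℝ X) * _ := mul_le_mul_right (kup_low μ h hr0) _
        _ = _ := by
          rw [← mul_assoc, ← ENNReal.ofReal_mul (by positivity), ← mul_pow]
          congr 3; ring

end polar
end part6

section part7
open MeasureTheory Metric Set
open scoped ENNReal RealInnerProductSpace Pointwise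

section auerbach
variable {X : Type*} [NormedAddCommGroup X] [InnerProductSpace ℝ X] [FiniteDimensional ℝ X]

lemma auerbach_basis {A : Set X} (hA : IsCompact A) (h0 : (0 : X) ∈ interior A) :
    ∃ e : Module.Basis (Fin (Module.finrank ℝ X)) ℝ X, (∀ i, e i ∈ A) ∧
      ∀ y ∈ A, ∀ i, |e.repr y i| ≤ 1 := by
  set b := (stdOrthonormalBasis ℝ X).toBasis with hb
  have hcont : Continuous fun x : Fin (Module.finrank ℝ X) → X => |b.det x| := by
    have h1 : Continuous fun x : Fin (Module.finrank ℝ X) → X => b.toMatrix x := by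
      refine continuous_matrix fun i j => ?_
      simp only [Module.Basis.toMatrix_apply]
      exact ((b.coord i).continuous_of_finiteDimensional).comp (continuous_apply j)
    simp only [Module.Basis.det_apply]
    exact h1.matrix_det.abs
  have hcp : IsCompact (univ.pi fun _ : Fin (Module.finrank ℝ X) => A) := isCompact_univ_pi fun _ => hA
  obtain ⟨x, hx, hmax⟩ := hcp.exists_isMaxOn ⟨0, fun i _ => interior_subset h0⟩ hcont.continuousOn
  have hmax' : ∀ z : Fin (Module.finrank ℝ X) → X, (∀ i, z i ∈ A) → |b.det z| ≤ |b.det x| :=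
    fun z hz => hmax (show z ∈ univ.pi _ from fun i _ => hz i)
  have hxA : ∀ i, x i ∈ A := fun i => hx i (mem_univ i)
  obtain ⟨ε, hε, hball⟩ := Metric.mem_nhds_iff.1 (mem_interior_iff_mem_nhds.1 h0)
  have hpos : 0 < |b.det x| := by
    refine lt_of_lt_of_le ?_ (hmax' (fun i => (ε / 2) • b i) fun i => hball ?_)
    · have : b.det (fun i => (ε / 2) • b i) = (ε / 2) ^ (Module.finrank ℝ X) := by
        have := b.det.map_smul_univ (fun _ => ε / 2) b
        rw [this]
        simp [Module.Basis.det_self, div_pow]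
      rw [this]; positivity
    · rw [mem_ball_zero_iff, norm_smul, hb]
      simp [abs_of_pos hε, hε]
  have hbas : LinearIndependent ℝ x ∧ Submodule.span ℝ (range x) = ⊤ :=
    (b.is_basis_iff_det).2 (isUnit_iff_ne_zero.2 (abs_pos.1 hpos))
  refine ⟨Module.Basis.mk hbas.1 hbas.2.ge, fun i => by simpa using hxA i, fun y hy i => ?_⟩
  have h1 := congrArg (fun f => f y) (b.det_smul_mk_coord_eq_det_update hbas.1 hbas.2.ge i)
  simp only [LinearMap.smul_apply, smul_eq_mul, Module.Basis.coord_apply] at h1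
  have h2 : |b.det (Function.update x i y)| ≤ |b.det x| := by
    refine hmax' _ fun j => ?_
    rcases eq_or_ne j i with rfl | hj
    · simpa using hy
    · simpa [hj] using hxA j
  have h3 : |b.det x| * |(Module.Basis.mk hbas.1 hbas.2.ge).repr y i| ≤ |b.det x| * 1 := by
    rw [← abs_mul, h1, mul_one]
    simpa using h2
  exact le_of_mul_le_mul_left h3 hpos

lemma auerbach {A : Set X} (hA : IsCompact A) (hc : Convex ℝ A) (hs : ∀ x ∈ A, -x ∈ A)
    (h0 : (0 : X) ∈ interior A) (hk : 1 ≤ Module.finrank ℝ X) :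
    ∃ T : X ≃ₗ[ℝ] X, SB (T '' A) (Module.finrank ℝ X) := by
  obtain ⟨e, heA, he⟩ := auerbach_basis hA h0
  have hk' : (1 : ℝ) ≤ Module.finrank ℝ X := by exact_mod_cast hk
  set o := stdOrthonormalBasis ℝ X
  set T : X ≃ₗ[ℝ] X := e.equiv o.toBasis (Equiv.refl _) with hT
  have hTe : ∀ i, T (e i) = o i := fun i => by simp [hT]
  have hTy : ∀ y, T y = ∑ i, e.repr y i • o i := fun y => by
    conv_lhs => rw [← e.sum_repr y]
    rw [map_sum]
    exact Finset.sum_congr rfl fun i _ => by rw [map_smul, hTe]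
  refine ⟨T, hA.image T.toLinearMap.continuous_of_finiteDimensional,
    hc.linear_image T.toLinearMap, ?_, ?_, ?_⟩
  · rintro _ ⟨y, hy, rfl⟩
    exact ⟨-y, hs y hy, by simp⟩
  · intro z hz
    rw [mem_closedBall_zero_iff] at hz
    refine ⟨T.symm z, ?_, by simp⟩
    have hz1 : T.symm z = ∑ i, ((Module.finrank ℝ X : ℝ)⁻¹) • ((Module.finrank ℝ X * o.repr z i) • e i) := by
      rw [LinearEquiv.symm_apply_eq, map_sum]
      conv_lhs => rw [← o.sum_repr z]
      refine Finset.sum_congr rfl fun i _ => ?_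
      rw [map_smul, map_smul, hTe, smul_smul, ← mul_assoc, inv_mul_cancel₀ (by positivity), one_mul]
    rw [hz1]
    refine hc.sum_mem (fun _ _ => by positivity) ?_ fun i _ => ?_
    · simp only [Finset.sum_const, Finset.card_univ, Fintype.card_fin, nsmul_eq_mul]
      exact mul_inv_cancel₀ (by positivity)
    · have hci : |o.repr z i| ≤ (Module.finrank ℝ X : ℝ)⁻¹ := by
        rw [o.repr_apply_apply]
        have := abs_real_inner_le_norm (o i) z
        rw [o.norm_eq_one, one_mul] at this
        exact this.trans hz
      have h1 : |(Module.finrank ℝ X : ℝ) * o.repr z i| ≤ 1 := by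
        rw [abs_mul, abs_of_nonneg (by positivity : (0 : ℝ) ≤ Module.finrank ℝ X)]
        calc _ ≤ (Module.finrank ℝ X : ℝ) * (Module.finrank ℝ X : ℝ)⁻¹ := by gcongr
          _ = 1 := mul_inv_cancel₀ (by positivity)
      obtain ⟨h2, h3⟩ := abs_le.1 h1
      have := hc (heA i) (hs _ (heA i)) (a := (1 + Module.finrank ℝ X * o.repr z i) / 2)
        (b := (1 - Module.finrank ℝ X * o.repr z i) / 2) (by linarith) (by linarith) (by ring)
      convert this using 1
      module
  · rintro _ ⟨y, hy, rfl⟩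
    rw [mem_closedBall_zero_iff, hTy]
    calc _ ≤ ∑ i, ‖e.repr y i • o i‖ := norm_sum_le _ _
      _ ≤ ∑ i : Fin (Module.finrank ℝ X), (1 : ℝ) := by
          refine Finset.sum_le_sum fun i _ => ?_
          rw [norm_smul, o.norm_eq_one, mul_one]
          exact he y hy i
      _ = Module.finrank ℝ X := by simp

variable [MeasurableSpace X] [BorelSpace X] (μ : Measure X) [μ.IsAddHaarMeasure]

lemma det_adj (f : X →ₗ[ℝ] X) : LinearMap.det f.adjoint = LinearMap.det f := by
  set o := stdOrthonormalBasis ℝ X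
  rw [← LinearMap.det_toMatrix o.toBasis, ← LinearMap.det_toMatrix o.toBasis f,
    LinearMap.toMatrix_adjoint, Matrix.det_conjTranspose]
  simp

lemma VP_image (T : X ≃ₗ[ℝ] X) (A : Set X) : VP μ (T '' A) = VP μ A := by
  have hd : LinearMap.det (T : X →ₗ[ℝ] X) ≠ 0 := T.isUnit_det'.ne_zero
  have e : pol (T '' A) = (LinearMap.adjoint (T : X →ₗ[ℝ] X)) ⁻¹' pol A := by
    ext x
    simp [pol, LinearMap.adjoint_inner_left]
  unfold VP
  rw [e, Measure.addHaar_preimage_linearMap μ (by rw [det_adj]; exact hd), det_adj]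
  have := Measure.addHaar_image_linearMap μ (T : X →ₗ[ℝ] X) A
  simp only [LinearEquiv.coe_coe] at this
  rw [this, mul_mul_mul_comm, ← ENNReal.ofReal_mul (by positivity), ← abs_mul,
    mul_inv_cancel₀ hd]
  simp

lemma VP_compare {A D : Set X} (hA : IsCompact A) (hAc : Convex ℝ A) (hAs : ∀ x ∈ A, -x ∈ A)
    (hA0 : (0 : X) ∈ interior A) (hD : IsCompact D) (hDc : Convex ℝ D) (hDs : ∀ x ∈ D, -x ∈ D)
    (hD0 : (0 : X) ∈ interior D) (hk : 1 ≤ Module.finrank ℝ X) (j : ℕ)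
    (hj : (Module.finrank ℝ X : ℝ) ≤ 2 ^ (2 ^ j)) :
    VP μ D ≤ ENNReal.ofReal ((16 * 8 ^ j) ^ Module.finrank ℝ X) * VP μ A := by
  obtain ⟨T, hT⟩ := auerbach hA hAc hAs hA0 hk
  obtain ⟨S, hS⟩ := auerbach hD hDc hDs hD0 hk
  have hk' : (1 : ℝ) ≤ Module.finrank ℝ X := by exact_mod_cast hk
  have h1 := (kup_iter μ j _ _ hS hk' hj).1
  have h2 := (kup_iter μ j _ _ hT hk' hj).2
  rw [VP_image] at h1 h2
  refine h1.trans ((mul_le_mul_right h2 _).trans_eq ?_)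
  rw [← mul_assoc, ← ENNReal.ofReal_mul (by positivity), ← mul_pow]
  congr 3
  rw [show (8 : ℝ) = 2 * 4 by norm_num, mul_pow]; ring

lemma pol_pos {A : Set X} (hA : IsCompact A) : 0 < μ (pol A) := by
  obtain ⟨r, hr, h⟩ := hA.isBounded.subset_closedBall_lt 0 0
  exact (measure_closedBall_pos μ _ (inv_pos.2 hr)).trans_le (measure_mono (ball_sub_pol hr h))

lemma pol_compact {A : Set X} (h0 : (0 : X) ∈ interior A) : IsCompact (pol A) := by
  obtain ⟨ε, hε, h⟩ := Metric.nhds_basis_closedBall.mem_iff.1 (mem_interior_iff_mem_nhds.1 h0)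
  exact (isCompact_closedBall (0 : X) ε⁻¹).of_isClosed_subset (pol_closed A)
    (pol_sub_ball (inv_pos.2 hε) (by rwa [inv_inv]))

lemma pol_interior {A : Set X} (hA : IsCompact A) : (0 : X) ∈ interior (pol A) := by
  obtain ⟨r, hr, h⟩ := hA.isBounded.subset_closedBall_lt 0 0
  rw [mem_interior_iff_mem_nhds]
  exact Filter.mem_of_superset (closedBall_mem_nhds 0 (inv_pos.2 hr)) (ball_sub_pol hr h)

/-- duality step: from a comparison of polars to a comparison of bodies. -/
lemma dual_compare {A D : Set X} (hA : IsCompact A) (hAc : Convex ℝ A) (hAs : ∀ x ∈ A, -x ∈ A)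
    (hA0 : (0 : X) ∈ interior A) (hD : IsCompact D) (hDc : Convex ℝ D) (hDs : ∀ x ∈ D, -x ∈ D)
    (hD0 : (0 : X) ∈ interior D) (hk : 1 ≤ Module.finrank ℝ X) (j : ℕ)
    (hj : (Module.finrank ℝ X : ℝ) ≤ 2 ^ (2 ^ j)) (G : ℝ≥0∞) (hG : μ (pol A) ≤ G * μ (pol D)) :
    μ D ≤ ENNReal.ofReal ((16 * 8 ^ j) ^ Module.finrank ℝ X) * G * μ A := by
  have h := VP_compare μ hA hAc hAs hA0 hD hDc hDs hD0 hk j hj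
  unfold VP at h
  have hp := pol_pos μ hD
  have hf : μ (pol D) ≠ ∞ := (pol_compact hD0).measure_lt_top.ne
  have h2 : μ (pol D) * μ D ≤ μ (pol D) *
      (ENNReal.ofReal ((16 * 8 ^ j) ^ Module.finrank ℝ X) * G * μ A) := by
    calc _ = μ D * μ (pol D) := mul_comm _ _
      _ ≤ _ := h
      _ ≤ ENNReal.ofReal ((16 * 8 ^ j) ^ Module.finrank ℝ X) * (μ A * (G * μ (pol D))) := by gcongr
      _ = _ := by ring
  exact (ENNReal.mul_le_mul_iff_right hp.ne' hf).1 h2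

end auerbach
end part7

section part8
open MeasureTheory Metric Set
open scoped ENNReal RealInnerProductSpace Pointwise

section assembly

lemma bary_transfer {P V : Type*} [NormedAddCommGroup P] [NormedSpace ℝ P] [FiniteDimensional ℝ P]
    [MeasurableSpace P] [BorelSpace P] [NormedAddCommGroup V] [NormedSpace ℝ V]
    [FiniteDimensional ℝ V] [MeasurableSpace V] [BorelSpace V] (ρ : Measure P) [ρ.IsAddHaarMeasure]
    (τ : Measure V) [τ.IsAddHaarMeasure] (φ : P ≃L[ℝ] V) {K : Set V}
    (h : ∫ x in K, x ∂τ = 0) : ∫ p in φ ⁻¹' K, p ∂ρ = 0 := by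
  have hH : (ρ.map φ).IsAddHaarMeasure := φ.isAddHaarMeasure_map ρ
  have hc : ρ.map φ = Measure.addHaarScalarFactor (ρ.map φ) τ • τ :=
    Measure.isAddLeftInvariant_eq_smul _ _
  have h1 : ∫ x in K, x ∂(ρ.map φ) = 0 := by
    rw [hc]
    have : ((Measure.addHaarScalarFactor (ρ.map φ) τ • τ).restrict K) =
        Measure.addHaarScalarFactor (ρ.map φ) τ • (τ.restrict K) := Measure.restrict_smul _ _ _
    rw [this, integral_smul_nnreal_measure, h, smul_zero]
  have he : MeasurableEmbedding φ := φ.toHomeomorph.measurableEmbedding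
  rw [he.setIntegral_map] at h1
  have h2 : φ (∫ p in φ ⁻¹' K, p ∂ρ) = 0 := by
    rw [← h1]
    exact (φ.integral_comp_comm (fun p => p)).symm
  simpa using h2

variable {V : Type*} [NormedAddCommGroup V] [InnerProductSpace ℝ V] [FiniteDimensional ℝ V]
  [MeasurableSpace V] [BorelSpace V] (τ : Measure V) [τ.IsAddHaarMeasure] (H : Submodule ℝ V)

lemma hull_compact {A B : Set V} (hA : IsCompact A) (hB : IsCompact B) (hAc : Convex ℝ A)
    (hBc : Convex ℝ B) (hA0 : A.Nonempty) (hB0 : B.Nonempty) :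
    IsCompact (convexHull ℝ (A ∪ B)) := by
  rw [hAc.convexHull_union hBc hA0 hB0]
  have : convexJoin ℝ A B = (fun p : (V × V) × ℝ => (1 - p.2) • p.1.1 + p.2 • p.1.2) ''
      ((A ×ˢ B) ×ˢ Icc (0 : ℝ) 1) := by
    ext x
    simp only [mem_convexJoin, segment_eq_image]
    constructor
    · rintro ⟨a, ha, b, hb, t, ht, rfl⟩
      exact ⟨((a, b), t), ⟨⟨ha, hb⟩, ht⟩, rfl⟩
    · rintro ⟨⟨⟨a, b⟩, t⟩, ⟨⟨ha, hb⟩, ht⟩, rfl⟩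
      exact ⟨a, ha, b, hb, t, ht, rfl⟩
  rw [this]
  exact ((hA.prod hB).prod isCompact_Icc).image (by fun_prop)

/-- orthogonal splitting -/
def splitL : (H × Hᗮ) ≃L[ℝ] V :=
  (H.prodEquivOfIsCompl Hᗮ H.isCompl_orthogonal).toContinuousLinearEquiv

lemma splitL_apply (p : H × Hᗮ) : splitL H p = (p.1 : V) + p.2 := by
  simp [splitL]

lemma proj_splitL (p : H × Hᗮ) : H.orthogonalProjectionOnto (splitL H p) = p.1 := by
  rw [splitL_apply, map_add, Submodule.orthogonalProjectionOnto_mem_subspace_eq_self]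
  simp

lemma fst_preimage (S : Set V) :
    Prod.fst '' (splitL H ⁻¹' S) = H.orthogonalProjectionOnto '' S := by
  ext h
  constructor
  · rintro ⟨p, hp, rfl⟩
    exact ⟨_, hp, proj_splitL H p⟩
  · rintro ⟨x, hx, rfl⟩
    refine ⟨(splitL H).symm x, by simpa using hx, ?_⟩
    rw [← proj_splitL, ContinuousLinearEquiv.apply_symm_apply]

lemma case1_V {K : Set V} (hK : IsCompact K) (hc : Convex ℝ K) (h0 : (0 : V) ∈ interior K)
    (hb : ∫ x in K, x ∂τ = 0) (μ : Measure H) [μ.IsAddHaarMeasure]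
    (hE : 1 ≤ Module.finrank ℝ H) (hF : 1 ≤ Module.finrank ℝ Hᗮ) :
    μ (H.orthogonalProjectionOnto '' (convexHull ℝ (K ∪ -K))) ≤
      ENNReal.ofReal ((8 * Real.exp 1 * (Module.finrank ℝ V / Module.finrank ℝ H)) ^
        Module.finrank ℝ H) * μ (H.orthogonalProjectionOnto '' (K ∩ -K)) := by
  set K' := splitL H ⁻¹' K with hK'
  have k1 : IsCompact K' := (splitL H).toHomeomorph.isCompact_preimage.2 hK
  have k2 : Convex ℝ K' := hc.linear_preimage (splitL H).toLinearEquiv.toLinearMap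
  have k3 : (0 : H × Hᗮ) ∈ interior K' := by
    have : interior K' = splitL H ⁻¹' interior K := ((splitL H).toHomeomorph.preimage_interior K).symm
    rw [this]; simpa using h0
  have k4 := bary_transfer (μ.prod (μH[(Module.finrank ℝ Hᗮ : ℝ)] : Measure Hᗮ)) τ (splitL H) hb
  have m1 := case1_main μ _ k1 k2 k3 k4 hE hF
  have m2 := out_le μ k1 k2 (interior_subset k3)
  have e1 : K' ∩ -K' = splitL H ⁻¹' (K ∩ -K) := by
    ext p; simp [hK']
  have e2 : convexHull ℝ (K' ∪ -K') = splitL H ⁻¹' (convexHull ℝ (K ∪ -K)) := by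
    have e3 : K' ∪ -K' = (splitL H).symm '' (K ∪ -K) := by
      rw [ContinuousLinearEquiv.image_symm_eq_preimage]
      ext p; simp [hK']
    rw [e3, ← ContinuousLinearEquiv.image_symm_eq_preimage]
    exact ((splitL H).symm.toLinearEquiv.toLinearMap.image_convexHull _).symm
  rw [e1, fst_preimage, fst_preimage] at m1
  rw [e2, fst_preimage, hK', fst_preimage] at m2
  refine m2.trans ((mul_le_mul_right m1 _).trans_eq ?_)
  rw [Submodule.finrank_add_finrank_orthogonal, ← mul_assoc, ← mul_assoc,
    ← ENNReal.ofReal_mul (by positivity), ← ENNReal.ofReal_mul (by positivity), ← mul_pow, ← mul_pow]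
  congr 3
  ring

lemma inner_proj (h : H) (x : V) : ⟪h, H.orthogonalProjectionOnto x⟫ = ⟪(h : V), x⟫ :=
  Submodule.inner_orthogonalProjectionOnto_eq_of_mem_left h x

lemma case2_V {K : Set V} (hK : IsCompact K) (hc : Convex ℝ K) (h0 : (0 : V) ∈ interior K)
    (hb : ∫ x in pol K, x ∂τ = 0) (μ : Measure H) [μ.IsAddHaarMeasure]
    (hE : 1 ≤ Module.finrank ℝ H) (hF : 1 ≤ Module.finrank ℝ Hᗮ) (j : ℕ)
    (hj : (Module.finrank ℝ H : ℝ) ≤ 2 ^ (2 ^ j)) :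
    μ (H.orthogonalProjectionOnto '' (convexHull ℝ (K ∪ -K))) ≤
      ENNReal.ofReal ((8 * Real.exp 1 * (Module.finrank ℝ V / Module.finrank ℝ H) * (16 * 8 ^ j)) ^
        Module.finrank ℝ H) * μ (H.orthogonalProjectionOnto '' (K ∩ -K)) := by
  have hK0 : (0 : V) ∈ K := interior_subset h0
  set L := pol K with hL
  have l1 : IsCompact L := pol_compact h0
  have l2 : Convex ℝ L := pol_convex K
  have l3 : (0 : V) ∈ interior L := pol_interior hK
  set ψ : (Hᗮ × H) ≃L[ℝ] V := (ContinuousLinearEquiv.prodComm ℝ Hᗮ H).trans (splitL H) with hψ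
  have hψa : ∀ p : Hᗮ × H, ψ p = (p.2 : V) + p.1 := fun p => by simp [hψ, splitL_apply]
  set L' := ψ ⁻¹' L with hL'
  have k1 : IsCompact L' := ψ.toHomeomorph.isCompact_preimage.2 l1
  have k2 : Convex ℝ L' := l2.linear_preimage ψ.toLinearEquiv.toLinearMap
  have k3 : (0 : Hᗮ × H) ∈ interior L' := by
    have : interior L' = ψ ⁻¹' interior L := (ψ.toHomeomorph.preimage_interior L).symm
    rw [this]; simpa using l3
  have k4 := bary_transfer ((μH[(Module.finrank ℝ Hᗮ : ℝ)] : Measure Hᗮ).prod μ) τ ψ hb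
  have m1 := case2_main μ _ k1 k2 k3 k4 hE hF
  set A := H.orthogonalProjectionOnto '' (K ∩ -K) with hA
  set D := H.orthogonalProjectionOnto '' (convexHull ℝ (K ∪ -K)) with hD
  have hcont : Continuous H.orthogonalProjectionOnto := H.orthogonalProjectionOnto.continuous
  have hKn : IsCompact (-K) := hK.neg
  have hCc : IsCompact (convexHull ℝ (K ∪ -K)) := hull_compact hK hKn hc hc.neg ⟨0, hK0⟩ ⟨0, by simpa using hK0⟩
  have a1 : IsCompact A := (hK.inter hKn).image hcont
  have a2 : Convex ℝ A := (hc.inter hc.neg).linear_image H.orthogonalProjectionOnto.toLinearMap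
  have a3 : ∀ x ∈ A, -x ∈ A := by
    rintro _ ⟨x, hx, rfl⟩
    exact ⟨-x, ⟨hx.2, by simpa using hx.1⟩, by simp⟩
  have a4 : (0 : H) ∈ interior A := by
    have hn : K ∩ -K ∈ nhds (0 : V) := by
      refine Filter.inter_mem (mem_interior_iff_mem_nhds.1 h0) ?_
      have : Filter.Tendsto (fun x : V => -x) (nhds 0) (nhds 0) := by
        simpa using (continuous_neg (G := V)).tendsto 0
      exact this (mem_interior_iff_mem_nhds.1 h0)
    rw [mem_interior_iff_mem_nhds]
    have : (Subtype.val : H → V) ⁻¹' (K ∩ -K) ∈ nhds (0 : H) :=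
      continuous_subtype_val.continuousAt.preimage_mem_nhds (by simpa using hn)
    refine Filter.mem_of_superset this fun h hh => ⟨h, hh, ?_⟩
    exact Submodule.orthogonalProjectionOnto_mem_subspace_eq_self h
  have hAD : A ⊆ D := image_mono ((inter_subset_left.trans subset_union_left).trans (subset_convexHull ℝ _))
  have d1 : IsCompact D := hCc.image hcont
  have d2 : Convex ℝ D := (convex_convexHull ℝ _).linear_image H.orthogonalProjectionOnto.toLinearMap
  have d3 : ∀ x ∈ D, -x ∈ D := by
    rintro _ ⟨x, hx, rfl⟩
    refine ⟨-x, ?_, by simp⟩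
    have : -x ∈ -convexHull ℝ (K ∪ -K) := by simpa using hx
    rw [← convexHull_neg] at this
    simpa [union_comm] using this
  have d4 : (0 : H) ∈ interior D := interior_mono hAD a4
  have p1 : pol A ⊆ Prod.mk 0 ⁻¹' (L' - L') := by
    intro h hh
    have q1 : (h : V) ∈ pol (pol L ∩ pol (-L)) := by
      intro y hy
      rw [← inner_proj]
      refine hh _ ⟨y, ⟨bipol hK hc hK0 hy.1, ?_⟩, rfl⟩
      refine bipol hK hc hK0 fun z hz => ?_
      have := hy.2 (-z) (by simpa using hz)
      simpa using this
    obtain ⟨a, ha, b, hb', hab⟩ := pol_lemma l1 l1.neg l2 l2.neg (interior_subset l3)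
      (by simpa using interior_subset l3) q1
    refine ⟨ψ.symm a, by simpa [hL'] using ha, ψ.symm (-b), by simpa [hL'] using hb', ?_⟩
    apply ψ.injective
    change ψ (ψ.symm a - ψ.symm (-b)) = ψ (0, h)
    rw [map_sub, ψ.apply_symm_apply, ψ.apply_symm_apply, sub_neg_eq_add, hψa]
    simpa using hab
  have p2 : Prod.mk 0 ⁻¹' (L' ∩ -L') ⊆ pol D := by
    rintro h ⟨h1, h2⟩
    have h1' : (h : V) ∈ L := by simpa [hL', hψa] using h1
    have h2' : -(h : V) ∈ L := by simpa [hL', hψa] using h2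
    rintro _ ⟨y, hy, rfl⟩
    rw [inner_proj]
    have : convexHull ℝ (K ∪ -K) ⊆ {y | ⟪(h : V), y⟫ ≤ 1} := by
      refine convexHull_min ?_ ?_
      · rintro y (hy | hy)
        · exact h1' y hy
        · have := h2' _ hy
          simpa using this
      · exact convex_halfSpace_le (f := fun y => ⟪(h : V), y⟫) ⟨fun _ _ => inner_add_right _ _ _,
          fun _ _ => real_inner_smul_right _ _ _⟩ 1
    exact this hy
  have m2 := (measure_mono p1).trans (m1.trans (mul_le_mul_right (measure_mono p2) _))
  refine (dual_compare μ a1 a2 a3 a4 d1 d2 d3 d4 hE j hj _ m2).trans_eq ?_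
  rw [Submodule.finrank_add_finrank_orthogonal,
    ← ENNReal.ofReal_mul (by positivity), ← ENNReal.ofReal_mul (by positivity), ← mul_pow, ← mul_pow]
  congr 3
  ring

end assembly
end part8

lemma vrad_of {n k : ℕ} (hk : 1 ≤ k) (H : Submodule ℝ (EuclideanSpace ℝ (Fin n)))
    (hH : Module.finrank ℝ H = k) {S T : Set (EuclideanSpace ℝ (Fin n))} {c : ℝ} (hc : 0 ≤ c)
    (h : (μH[(Module.finrank ℝ H : ℝ)] : Measure H) (H.orthogonalProjectionOnto '' S) ≤
      ENNReal.ofReal (c ^ Module.finrank ℝ H) *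
        (μH[(Module.finrank ℝ H : ℝ)] : Measure H) (H.orthogonalProjectionOnto '' T)) :
    vrad k H (projSet H S) ≤ ENNReal.ofReal c * vrad k H (projSet H T) := by
  have e : ∀ S, μH[(k : ℝ)] (projSet H S) =
      (μH[(Module.finrank ℝ H : ℝ)] : Measure H) (H.orthogonalProjectionOnto '' S) := by
    intro S
    have e1 : projSet H S = (Subtype.val : H → _) '' (H.orthogonalProjectionOnto '' S) := by
      unfold projSet
      rw [image_image]
    rw [e1, hH]
    exact isometry_subtype_coe.hausdorffMeasure_image (Or.inl (by positivity)) _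
  unfold vrad
  rw [e, e]
  rw [hH] at h ⊢
  have hk0 : k ≠ 0 := by omega
  calc _ ≤ ((ENNReal.ofReal c ^ k) * ((μH[(k : ℝ)] : Measure H) (H.orthogonalProjectionOnto '' T) /
        μH[(k : ℝ)] (closedBall (0 : EuclideanSpace ℝ (Fin n)) 1 ∩ (H : Set _)))) ^ ((k : ℝ)⁻¹) := by
        refine ENNReal.rpow_le_rpow ?_ (by positivity)
        rw [← mul_div_assoc, ← ENNReal.ofReal_pow hc]
        exact ENNReal.div_le_div_right h _
    _ = _ := by
        rw [ENNReal.mul_rpow_of_nonneg _ _ (by positivity), ENNReal.pow_rpow_inv_natCast hk0]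

lemma vrad_mono {a b : ℝ} {x y : ℝ≥0∞} (hab : a ≤ b) (h : x ≤ ENNReal.ofReal a * y) :
    x ≤ ENNReal.ofReal b * y :=
  h.trans (mul_le_mul_left (ENNReal.ofReal_le_ofReal hab) _)

lemma exists_j {n : ℕ} (hn : 2 ≤ n) : ∃ j : ℕ, (n : ℝ) ≤ 2 ^ (2 ^ j) ∧
    (8 : ℝ) ^ j ≤ 8 * (Real.log n / Real.log 2) ^ 3 := by
  have hl2 : 0 < Real.log 2 := Real.log_pos (by norm_num)
  have hn' : (2 : ℝ) ≤ n := by exact_mod_cast hn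
  set x := Real.log n / Real.log 2 with hx
  have hx1 : 1 ≤ x := by
    rw [hx, le_div_iff₀ hl2, one_mul]
    exact Real.log_le_log (by norm_num) hn'
  obtain ⟨m, hm1, hm2⟩ := exists_nat_pow_near hx1 (by norm_num : (1 : ℝ) < 2)
  refine ⟨m + 1, ?_, ?_⟩
  · rw [← Real.log_le_log_iff (by positivity) (by positivity), Real.log_pow]
    rw [hx, div_lt_iff₀ hl2] at hm2
    push_cast
    exact hm2.le
  · calc (8 : ℝ) ^ (m + 1) = 8 * (2 ^ m) ^ 3 := by
          rw [pow_succ, ← pow_mul, mul_comm m 3, pow_mul]; norm_num [mul_comm]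
      _ ≤ _ := by gcongr

/-- Theorem (projections of the outer and inner regularizations): for a convex body `K` with
barycenter of `K` or of `K°` at the origin,
`vrad(P_H(K_out)) ≤ (n/k)·C·(log n)³ · vrad(P_H(K_in))`. -/
theorem stmt0 :
    ∃ C : ℝ, 0 < C ∧ ∀ (n : ℕ), 2 ≤ n →
      ∀ K : Set (EuclideanSpace ℝ (Fin n)),
        IsCompact K → Convex ℝ K → (0 : EuclideanSpace ℝ (Fin n)) ∈ interior K →
        ((∫ x in K, x) = 0 ∨ (∫ x in polarBody K, x) = 0) →
        ∀ k : ℕ, 1 ≤ k → k ≤ n - 1 →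
          ∀ H : Submodule ℝ (EuclideanSpace ℝ (Fin n)), Module.finrank ℝ H = k →
            vrad k H (projSet H (convexHull ℝ (K ∪ -K))) ≤
              ENNReal.ofReal (((n : ℝ) / k) * C * (Real.log n) ^ 3) *
                vrad k H (projSet H (K ∩ -K)) := by
  have hl2 : 0 < Real.log 2 := Real.log_pos (by norm_num)
  refine ⟨8 * Real.exp 1 * 128 / Real.log 2 ^ 3, by positivity, ?_⟩
  intro n hn K hK hc h0 hb k hk1 hkn H hH
  have hn' : (2 : ℝ) ≤ n := by exact_mod_cast hn
  have hk' : (1 : ℝ) ≤ k := by exact_mod_cast hk1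
  have hV : Module.finrank ℝ (EuclideanSpace ℝ (Fin n)) = n := by simp
  have hsum := Submodule.finrank_add_finrank_orthogonal H
  have hE : 1 ≤ Module.finrank ℝ H := by omega
  have hF : 1 ≤ Module.finrank ℝ Hᗮ := by omega
  have hlog : Real.log 2 ≤ Real.log n := Real.log_le_log (by norm_num) hn'
  have hx1 : 1 ≤ Real.log n / Real.log 2 := by rwa [le_div_iff₀ hl2, one_mul]
  have hC : (n : ℝ) / k * (8 * Real.exp 1 * 128 / Real.log 2 ^ 3) * Real.log n ^ 3 =
      8 * Real.exp 1 * (n / k) * (128 * (Real.log n / Real.log 2) ^ 3) := by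
    rw [div_pow]; ring
  rw [hC]
  rcases hb with hb | hb
  · have h := case1_V volume H hK hc h0 hb μH[(Module.finrank ℝ H : ℝ)] hE hF
    refine vrad_mono ?_ (vrad_of hk1 H hH (by positivity) h)
    rw [hV, hH]
    refine le_mul_of_one_le_right (by positivity) ?_
    have := one_le_pow₀ hx1 (n := 3)
    linarith
  · obtain ⟨j, hj1, hj2⟩ := exists_j hn
    have hj : (Module.finrank ℝ H : ℝ) ≤ 2 ^ (2 ^ j) := by
      refine le_trans ?_ hj1
      rw [hH]
      exact_mod_cast (by omega : k ≤ n)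
    have h := case2_V volume H hK hc h0 hb μH[(Module.finrank ℝ H : ℝ)] hE hF j hj
    refine vrad_mono ?_ (vrad_of hk1 H hH (by positivity) h)
    rw [hV, hH]
    refine mul_le_mul_of_nonneg_left ?_ (by positivity)
    linarith
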